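/- arXiv:2308.05066 — 4 statements merged into one kernel-verified Lean document; each statement's English description precedes it below -/
import Mathlib

section
/- Let k be a field of characteristic 0 and B a normal affine k-domain graded over k by an abelian group G. Assume that 𝔾(B)/𝔾̄(B) is not a torsion group, let r = rank(𝔾(B)/𝔾̄(B)) (the dimension of the ℚ-vector space ℚ ⊗_ℤ (𝔾(B)/𝔾̄(B))) and W = torc(𝔾̄(B), 𝔾(B)). Then: (a) there exists a set Δ of locally nilpotent derivations of B such that ⋂_{D∈Δ} ker D = B^{(W)}; (b) there exists a field K with ML(B) ⊆ B^{(W)} ⊆ K ⊆ Frac(B) such that Frac(B) is a purely transcendental extension of K of transcendence degree r; in particular, the transcendence degree of Frac(B) over Frac(ML(B)) is at least r; (c) B is non-rigid. -/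
noncomputable section

/-- A derivation is locally nilpotent. -/
def IsLND {R : Type*} [CommRing R] (D : Derivation ℤ R R) : Prop :=
  ∀ b : R, ∃ n : ℕ, 0 < n ∧ (⇑D)^[n] b = 0

/-- Kernel of a derivation, as a subring. -/
def kerDer {R : Type*} [CommRing R] (D : Derivation ℤ R R) : Subring R where
  carrier := {x | D x = 0}
  one_mem' := by simp
  mul_mem' := by
    intro a b ha hb
    simp only [Set.mem_setOf_eq] at *
    rw [Derivation.leibniz, ha, hb]
    simp
  add_mem' := by
    intro a b ha hb
    simp only [Set.mem_setOf_eq] at *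
    rw [map_add, ha, hb, add_zero]
  zero_mem' := by simp
  neg_mem' := by
    intro a ha
    simp only [Set.mem_setOf_eq] at *
    rw [map_neg, ha, neg_zero]

section Graded

variable {G : Type*} [AddCommGroup G] {B : Type*} [CommRing B]

/-- The Veronese subring `B^{(H)} = ⊕_{i ∈ H} B_i` of a `G`-graded ring,
realized as the subring generated by the homogeneous elements whose degree lies in `H`. -/
def verSub (𝒜 : G → AddSubgroup B) (H : AddSubgroup G) : Subring B :=
  Subring.closure (⋃ i ∈ (H : Set G), (𝒜 i : Set B))

/-- 𝔾(B): the subgroup of G generated by the degrees of nonzero homogeneous elements. -/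
def Gsub (𝒜 : G → AddSubgroup B) : AddSubgroup G :=
  AddSubgroup.closure { i : G | 𝒜 i ≠ ⊥ }

/-- `H ∈ 𝕋(B)`: the quotient `𝔾(B)/(H ∩ 𝔾(B))` is torsion. -/
def Tmem (𝒜 : G → AddSubgroup B) (H : AddSubgroup G) : Prop :=
  ∀ g ∈ Gsub 𝒜, ∃ n : ℕ, 0 < n ∧ n • g ∈ H

/-- A homogeneous derivation of `B`. -/
def IsHomogDer (𝒜 : G → AddSubgroup B) (D : Derivation ℤ B B) : Prop :=
  ∃ d : G, ∀ (i : G) (x : B), x ∈ 𝒜 i → D x ∈ 𝒜 (i + d)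

/-- A homogeneous derivation of a graded subring `S` of `B`. -/
def IsHomogDerOn (𝒜 : G → AddSubgroup B) (S : Subring B) (D : Derivation ℤ S S) : Prop :=
  ∃ d : G, ∀ (i : G) (x : S), (x : B) ∈ 𝒜 i → ((D x : S) : B) ∈ 𝒜 (i + d)

/-- 𝕄̄(B,p): the subgroup of G generated by the degrees i with B_i ⊄ p. -/
def Mbar (𝒜 : G → AddSubgroup B) (p : Ideal B) : AddSubgroup G :=
  AddSubgroup.closure { i : G | ¬ (𝒜 i : Set B) ⊆ (p : Set B) }

/-- A prime ideal of height 1. -/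
def heightOne {R : Type*} [CommRing R] (p : Ideal R) : Prop :=
  p.IsPrime ∧ (∃ q : Ideal R, q.IsPrime ∧ q < p) ∧
    ∀ q r : Ideal R, q.IsPrime → r.IsPrime → q < r → r < p → False

open Classical in
/-- 𝔾̄(B). -/
def Gbar (𝒜 : G → AddSubgroup B) : AddSubgroup G :=
  if ∃ p : Ideal B, heightOne p then ⨅ p : {p : Ideal B // heightOne p}, Mbar 𝒜 p.1
  else Gsub 𝒜

end Graded

/-- The torsion-closure of H in K: elements x ∈ K with n • x ∈ H for some n ≥ 1. -/
def torc {G : Type*} [AddCommGroup G] (H K : AddSubgroup G) : AddSubgroup G where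
  carrier := { x | x ∈ K ∧ ∃ n : ℕ, 0 < n ∧ n • x ∈ H }
  zero_mem' := ⟨K.zero_mem, 1, one_pos, by simpa using H.zero_mem⟩
  add_mem' := by
    rintro a b ⟨haK, n, hn, ha⟩ ⟨hbK, m, hm, hb⟩
    refine ⟨K.add_mem haK hbK, n * m, Nat.mul_pos hn hm, ?_⟩
    have h1 : (n * m) • (a + b) = m • (n • a) + n • (m • b) := by
      rw [smul_add, mul_smul, mul_smul, smul_comm n m a]
    rw [h1]
    exact H.add_mem (AddSubgroup.nsmul_mem H ha m) (AddSubgroup.nsmul_mem H hb n)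
  neg_mem' := by
    rintro a ⟨haK, n, hn, ha⟩
    exact ⟨K.neg_mem haK, n, hn, by rw [smul_neg]; exact H.neg_mem ha⟩

/-- The Makar-Limanov invariant ML(B), as a set. -/
def MLset {B : Type*} [CommRing B] : Set B :=
  { x | ∀ D : Derivation ℤ B B, IsLND D → D x = 0 }

open TensorProduct


section Helpers

variable {G : Type*} [AddCommGroup G] [DecidableEq G] {B : Type*} [CommRing B]
  (𝒜 : G → AddSubgroup B) [GradedRing 𝒜]

/-- Multiply the homogeneous component of degree `i` by the integer `w i`. -/
def wmap (w : G → ℤ) : B →+ B :=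
  (DirectSum.toAddMonoid (fun i => w i • (𝒜 i).subtype)).comp
    (DirectSum.decomposeAddEquiv 𝒜).toAddMonoidHom

theorem wmap_of_mem (w : G → ℤ) {i : G} {x : B} (hx : x ∈ 𝒜 i) : wmap 𝒜 w x = w i • x := by
  simp [wmap, DirectSum.decompose_of_mem 𝒜 hx]

theorem hom_ind {P : B → Prop} (h0 : P 0) (hh : ∀ i x, x ∈ 𝒜 i → P x)
    (ha : ∀ x y, P x → P y → P (x + y)) (x : B) : P x :=
  DirectSum.Decomposition.inductionOn 𝒜 h0 (fun {i} m => hh i m m.2) ha x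

theorem decompose_wmap (w : G → ℤ) (x : B) (i : G) :
    (DirectSum.decompose 𝒜 (wmap 𝒜 w x) i : B) = w i • (DirectSum.decompose 𝒜 x i : B) := by
  induction x using hom_ind 𝒜 with
  | h0 => simp
  | hh j x hx =>
    rw [wmap_of_mem 𝒜 w hx]
    by_cases h : j = i
    · subst h
      rw [DirectSum.decompose_of_mem_same 𝒜 hx,
        DirectSum.decompose_of_mem_same 𝒜 ((𝒜 j).zsmul_mem hx _)]
    · rw [DirectSum.decompose_of_mem_ne 𝒜 hx h,
        DirectSum.decompose_of_mem_ne 𝒜 ((𝒜 j).zsmul_mem hx _) h, smul_zero]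
  | ha x y hx hy => simp [hx, hy]

theorem ext_dec {x y : B}
    (h : ∀ i, (DirectSum.decompose 𝒜 x i : B) = (DirectSum.decompose 𝒜 y i : B)) : x = y := by
  apply (DirectSum.decompose 𝒜).injective
  ext i
  exact h i

variable {Q : Type*} [AddCommGroup Q] (q : G →+ Q)

open Classical in
/-- Projection on the `c`-component of the coarsened grading. -/
def cproj (c : Q) : B →+ B := wmap 𝒜 (fun i => if q i = c then 1 else 0)

/-- Being homogeneous of degree `c` for the coarsened grading. -/
def QH (c : Q) (x : B) : Prop := cproj 𝒜 q c x = x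

open Classical in
theorem cproj_of_mem (c : Q) {i : G} {x : B} (hx : x ∈ 𝒜 i) :
    cproj 𝒜 q c x = if q i = c then x else 0 := by
  rw [cproj, wmap_of_mem 𝒜 _ hx]; split_ifs <;> simp

open Classical in
theorem QH_iff (c : Q) (x : B) :
    QH 𝒜 q c x ↔ ∀ i, (DirectSum.decompose 𝒜 x i : B) ≠ 0 → q i = c := by
  constructor
  · intro h i hi
    have := decompose_wmap 𝒜 (fun i => if q i = c then 1 else 0) x i
    by_contra hc
    apply hi
    simp only [hc, if_false, zero_smul] at this
    rw [← this]
    unfold QH cproj at h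
    convert congrArg (fun z => (DirectSum.decompose 𝒜 z i : B)) h.symm
  · intro h
    apply ext_dec 𝒜
    intro i
    rw [cproj, decompose_wmap]
    by_cases hi : (DirectSum.decompose 𝒜 x i : B) = 0
    · rw [hi, smul_zero]
    · rw [if_pos (h i hi), one_smul]

theorem QH_of_mem {i : G} {x : B} (hx : x ∈ 𝒜 i) : QH 𝒜 q (q i) x := by
  rw [QH, cproj_of_mem 𝒜 q _ hx, if_pos rfl]

open Classical in
theorem cproj_cproj (c e : Q) (x : B) :
    cproj 𝒜 q e (cproj 𝒜 q c x) = if e = c then cproj 𝒜 q c x else 0 := by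
  induction x using hom_ind 𝒜 with
  | h0 => simp
  | hh j x hx =>
    rw [cproj_of_mem 𝒜 q c hx]
    by_cases h : q j = c
    · rw [if_pos h, cproj_of_mem 𝒜 q e hx]
      subst h
      simp [eq_comm]
    · simp [h]
  | ha x y hx hy =>
    simp only [map_add, hx, hy]
    split_ifs <;> simp

theorem QH_cproj (c : Q) (x : B) : QH 𝒜 q c (cproj 𝒜 q c x) := by
  rw [QH, cproj_cproj, if_pos rfl]

theorem cproj_mul' (c e : Q) (x y : B) :
    cproj 𝒜 q (e + c) (x * cproj 𝒜 q c y) = cproj 𝒜 q e x * cproj 𝒜 q c y := by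
  induction y using hom_ind 𝒜 with
  | h0 => simp
  | hh j y hy =>
    rw [cproj_of_mem 𝒜 q c hy]
    by_cases h : q j = c
    · rw [if_pos h]
      induction x using hom_ind 𝒜 with
      | h0 => simp
      | hh i x hx =>
        rw [cproj_of_mem 𝒜 q e hx, cproj_of_mem 𝒜 q _ (SetLike.mul_mem_graded hx hy), map_add, h]
        by_cases h2 : q i = e
        · simp [h2]
        · simp [h2]
      | ha x x' hx hx' => simp only [add_mul, map_add, hx, hx']
    · simp [h]
  | ha y y' hy hy' => simp only [mul_add, map_add, hy, hy']

theorem cproj_mul {c : Q} {y : B} (hy : QH 𝒜 q c y) (e : Q) (x : B) :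
    cproj 𝒜 q (e + c) (x * y) = cproj 𝒜 q e x * y := by
  have := cproj_mul' 𝒜 q c e x y
  rwa [hy] at this

theorem QH_mul {c e : Q} {x y : B} (hx : QH 𝒜 q c x) (hy : QH 𝒜 q e y) :
    QH 𝒜 q (c + e) (x * y) := by
  rw [QH, cproj_mul 𝒜 q hy, hx]

theorem QH_one : QH 𝒜 q 0 (1 : B) := by
  have := QH_of_mem 𝒜 q (SetLike.GradedOne.one_mem (A := 𝒜))
  rwa [map_zero] at this

theorem QH_pow {c : Q} {x : B} (hx : QH 𝒜 q c x) (n : ℕ) : QH 𝒜 q (n • c) (x ^ n) := by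
  induction n with
  | zero => simpa using QH_one 𝒜 q
  | succ n ih => rw [succ_nsmul, pow_succ]; exact QH_mul 𝒜 q ih hx

theorem QH_add {c : Q} {x y : B} (hx : QH 𝒜 q c x) (hy : QH 𝒜 q c y) : QH 𝒜 q c (x + y) := by
  rw [QH, map_add, hx, hy]

theorem QH_neg {c : Q} {x : B} (hx : QH 𝒜 q c x) : QH 𝒜 q c (-x) := by
  rw [QH, map_neg, hx]

theorem QH_zero (c : Q) : QH 𝒜 q c (0 : B) := by
  rw [QH, map_zero]

theorem QH_of_mul [IsDomain B] {c e : Q} {x y : B} (hy : QH 𝒜 q e y) (hy0 : y ≠ 0)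
    (hxy : QH 𝒜 q (c + e) (x * y)) : QH 𝒜 q c x := by
  rw [QH, cproj_mul 𝒜 q hy] at hxy
  exact mul_right_cancel₀ hy0 hxy

theorem cproj_of_QH_ne {c e : Q} {x : B} (hx : QH 𝒜 q c x) (h : e ≠ c) : cproj 𝒜 q e x = 0 := by
  have := cproj_cproj 𝒜 q c e x
  rwa [hx, if_neg h] at this

theorem QH_unique {c e : Q} {x : B} (hx : QH 𝒜 q c x) (hx' : QH 𝒜 q e x) (h : x ≠ 0) : c = e := by
  by_contra hne
  exact h ((hx.symm).trans (cproj_of_QH_ne 𝒜 q hx' hne))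

theorem sub_cproj_mem (I : Ideal B) (h : ∀ i, q i ≠ 0 → ∀ x ∈ 𝒜 i, x ∈ I) (x : B) :
    x - cproj 𝒜 q 0 x ∈ I := by
  induction x using hom_ind 𝒜 with
  | h0 => simp
  | hh i x hx =>
    rw [cproj_of_mem 𝒜 q 0 hx]
    split_ifs with h0
    · simp
    · simpa using h i h0 x hx
  | ha x y hx hy =>
    rw [map_add, add_sub_add_comm]; exact I.add_mem hx hy

theorem cproj_mem (I : Ideal B) (h : ∀ i, q i ≠ 0 → ∀ x ∈ 𝒜 i, x ∈ I) {c : Q} (hc : c ≠ 0)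
    (x : B) : cproj 𝒜 q c x ∈ I := by
  induction x using hom_ind 𝒜 with
  | h0 => simp
  | hh i x hx =>
    rw [cproj_of_mem 𝒜 q c hx]
    split_ifs with h0
    · exact h i (h0 ▸ hc) x hx
    · simp
  | ha x y hx hy =>
    rw [map_add]; exact I.add_mem hx hy

theorem mem_verSub_iff (H : AddSubgroup G) (x : B) :
    x ∈ verSub 𝒜 H ↔ QH 𝒜 (QuotientAddGroup.mk' H) 0 x := by
  constructor
  · intro hx
    induction hx using Subring.closure_induction with
    | mem x hx =>
      simp only [Set.mem_iUnion] at hx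
      obtain ⟨i, hi, hx⟩ := hx
      have := QH_of_mem 𝒜 (QuotientAddGroup.mk' H) hx
      rwa [(QuotientAddGroup.eq_zero_iff i).2 hi |> fun h => (h : QuotientAddGroup.mk' H i = 0)]
        at this
    | zero => exact QH_zero ..
    | one => exact QH_one ..
    | add x y _ _ hx hy => exact QH_add _ _ hx hy
    | neg x _ hx => exact QH_neg _ _ hx
    | mul x y _ _ hx hy => simpa using QH_mul _ _ hx hy
  · intro hx
    rw [← hx]
    clear hx
    induction x using hom_ind 𝒜 with
    | h0 => rw [map_zero]; exact zero_mem _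
    | hh i x hx =>
      rw [cproj_of_mem 𝒜 _ 0 hx]
      split_ifs with h0
      · have hi : i ∈ H := (QuotientAddGroup.eq_zero_iff i).1 h0
        exact Subring.subset_closure (Set.mem_biUnion hi hx)
      · exact zero_mem _
    | ha x y hx hy => rw [map_add]; exact add_mem hx hy

end Helpers

theorem exists_unif {B : Type*} [CommRing B] [IsDomain B] [IsIntegrallyClosed B]
    [IsNoetherianRing B] (p : Ideal B) (hp : heightOne p) (T : Set B) (hT : T ⊆ p)
    (hpT : p ≤ Ideal.span T) :
    ∃ π ∈ T, π ≠ 0 ∧ ∀ f : B, f ≠ 0 → ∃ (m : ℕ) (s s' : B), s ∉ p ∧ s' ∉ p ∧ s * f = s' * π ^ m := by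
  have : p.IsPrime := hp.1
  obtain ⟨-, ⟨q0, hq0, hq0p⟩, hmin⟩ := hp
  have hpb : p ≠ ⊥ := fun h => by subst h; exact not_lt_bot hq0p
  have hinj : Function.Injective (algebraMap B (Localization.AtPrime p)) :=
    IsLocalization.injective _ p.primeCompl_le_nonZeroDivisors
  have : IsDomain (Localization.AtPrime p) :=
    IsLocalization.isDomain_localization p.primeCompl_le_nonZeroDivisors
  have : IsNoetherianRing (Localization.AtPrime p) :=
    IsLocalization.isNoetherianRing p.primeCompl _ inferInstance
  have : IsIntegrallyClosed (Localization.AtPrime p) :=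
    isIntegrallyClosed_of_isLocalization _ p.primeCompl p.primeCompl_le_nonZeroDivisors
  have hcm : (IsLocalRing.maximalIdeal (Localization.AtPrime p)).comap
      (algebraMap B (Localization.AtPrime p)) = p := Localization.AtPrime.under_maximalIdeal
  have hmm : p.map (algebraMap B (Localization.AtPrime p)) =
      IsLocalRing.maximalIdeal (Localization.AtPrime p) := Localization.AtPrime.map_eq_maximalIdeal
  have hmb : IsLocalRing.maximalIdeal (Localization.AtPrime p) ≠ ⊥ := by
    rw [← hmm]
    intro h
    rw [Ideal.map_eq_bot_iff_of_injective hinj] at h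
    exact hpb h
  have : IsPrincipalIdealRing (Localization.AtPrime p) := by
    have htf : (IsIntegrallyClosed (Localization.AtPrime p) ∧
        ∀ P : Ideal (Localization.AtPrime p), P ≠ ⊥ → P.IsPrime →
          P = IsLocalRing.maximalIdeal (Localization.AtPrime p)) →
        IsPrincipalIdealRing (Localization.AtPrime p) :=
      ((tfae_of_isNoetherianRing_of_isLocalRing_of_isDomain (Localization.AtPrime p)).out 3 0).1
    refine htf ⟨inferInstance, ?_⟩
    intro P hP0 hP
    have hle : P.comap (algebraMap B (Localization.AtPrime p)) ≤ p :=
      (Ideal.comap_mono (IsLocalRing.le_maximalIdeal hP.ne_top)).trans hcm.le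
    have hPm : (P.comap (algebraMap B (Localization.AtPrime p))).map
        (algebraMap B (Localization.AtPrime p)) = P :=
      IsLocalization.map_under p.primeCompl (Localization.AtPrime p) P
    rcases eq_or_lt_of_le hle with h | h
    · rw [← hPm, ← hmm, h]
    · exfalso
      refine hmin ⊥ _ Ideal.isPrime_bot (hP.comap _) (bot_lt_iff_ne_bot.2 ?_) h
      intro h0
      rw [h0, Ideal.map_bot] at hPm
      exact hP0 hPm.symm
  have : IsDiscreteValuationRing (Localization.AtPrime p) := { not_a_field' := hmb }
  obtain ⟨ϖ, hϖ⟩ := IsDiscreteValuationRing.exists_irreducible (Localization.AtPrime p)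
  have hϖm := (IsDiscreteValuationRing.irreducible_iff_uniformizer ϖ).1 hϖ
  -- find π
  have hex : ∃ π ∈ T, algebraMap B (Localization.AtPrime p) π ∉ Ideal.span {ϖ ^ 2} := by
    by_contra! hcon
    have h1 : Ideal.span T ≤
        (Ideal.span {ϖ ^ 2}).comap (algebraMap B (Localization.AtPrime p)) :=
      Ideal.span_le.2 hcon
    have h2 := Ideal.map_le_iff_le_comap.2 (hpT.trans h1)
    rw [hmm, hϖm, Ideal.span_singleton_le_span_singleton] at h2
    obtain ⟨y, hy⟩ := h2
    have : ϖ * y = 1 := by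
      apply mul_left_cancel₀ hϖ.ne_zero
      rw [← mul_assoc, ← sq, ← hy, mul_one]
    exact hϖ.not_isUnit (IsUnit.of_mul_eq_one _ this)
  obtain ⟨π, hπT, hπ⟩ := hex
  have hπ0 : π ≠ 0 := by
    rintro rfl
    exact hπ (by simp)
  have hirr : Irreducible (algebraMap B (Localization.AtPrime p) π) := by
    have hmem : algebraMap B (Localization.AtPrime p) π ∈
        IsLocalRing.maximalIdeal (Localization.AtPrime p) := by
      have := hcm.ge (hT hπT)
      exact this
    rw [hϖm, Ideal.mem_span_singleton] at hmem
    obtain ⟨u, hu⟩ := hmem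
    have hun : IsUnit u := by
      by_contra hn
      have : u ∈ IsLocalRing.maximalIdeal (Localization.AtPrime p) := hn
      rw [hϖm, Ideal.mem_span_singleton] at this
      obtain ⟨v, rfl⟩ := this
      apply hπ
      rw [hu, Ideal.mem_span_singleton]
      exact ⟨v, by ring⟩
    rw [hu]
    exact (associated_mul_unit_left ϖ u hun).symm.irreducible hϖ
  refine ⟨π, hπT, hπ0, fun f hf => ?_⟩
  have hf' : algebraMap B (Localization.AtPrime p) f ≠ 0 := by
    intro h; exact hf (hinj (by rw [h, map_zero]))
  obtain ⟨m, u, hu⟩ := IsDiscreteValuationRing.eq_unit_mul_pow_irreducible hf' hirr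
  obtain ⟨⟨s', s⟩, hs⟩ := IsLocalization.surj p.primeCompl (u : Localization.AtPrime p)
  refine ⟨m, s, s', s.2, ?_, ?_⟩
  · intro hs'
    have h1 : algebraMap B (Localization.AtPrime p) s' ∈
        IsLocalRing.maximalIdeal (Localization.AtPrime p) := by
      exact hcm.ge hs'
    apply h1
    rw [← hs]
    exact u.isUnit.mul (IsLocalization.map_units _ s)
  · apply hinj
    simp only [map_mul, map_pow] at hs ⊢
    rw [hu, ← hs]
    ring

theorem local_struct {G : Type*} [AddCommGroup G] [DecidableEq G] {B : Type*} [CommRing B]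
    [IsDomain B] [IsIntegrallyClosed B] [IsNoetherianRing B]
    (𝒜 : G → AddSubgroup B) [GradedRing 𝒜] {Q : Type*} [AddCommGroup Q] (q : G →+ Q)
    (p : Ideal B) (hp : heightOne p) (h : ∀ i, q i ≠ 0 → ∀ x ∈ 𝒜 i, x ∈ p) :
    ∃ (π : B) (d : Q), π ≠ 0 ∧ QH 𝒜 q d π ∧ ∀ (f : B) (c : Q), QH 𝒜 q c f → f ≠ 0 →
      ∃ m : ℕ, c = m • d ∧ ∃ s s' : B, QH 𝒜 q 0 s ∧ s ≠ 0 ∧ s * f = s' * π ^ m := by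
  have hprime : p.IsPrime := hp.1
  obtain ⟨π, ⟨hπp, d, hπd⟩, hπ0, hπ⟩ := exists_unif p hp {x | x ∈ p ∧ ∃ c, QH 𝒜 q c x}
    (fun x hx => hx.1) (by
      intro x hx
      have h1 : x = cproj 𝒜 q 0 x + (x - cproj 𝒜 q 0 x) := by ring
      have h2 : cproj 𝒜 q 0 x ∈ p := by
        have := p.sub_mem hx (sub_cproj_mem 𝒜 q p h x)
        simpa using this
      rw [h1]
      refine Ideal.add_mem _ (Ideal.subset_span ⟨h2, 0, QH_cproj ..⟩) ?_
      refine sub_cproj_mem 𝒜 q _ ?_ x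
      intro i hi y hy
      exact Ideal.subset_span ⟨h i hi y hy, q i, QH_of_mem _ _ hy⟩)
  refine ⟨π, d, hπ0, hπd, fun f c hf hf0 => ?_⟩
  obtain ⟨m, s, s', hs, hs', hss⟩ := hπ f hf0
  have hs0 : cproj 𝒜 q 0 s ∉ p := by
    intro h0
    apply hs
    have := p.add_mem (sub_cproj_mem 𝒜 q p h s) h0
    simpa using this
  have key : cproj 𝒜 q 0 s * f = cproj 𝒜 q (c - m • d) s' * π ^ m := by
    have h1 := cproj_mul 𝒜 q hf 0 s
    have h2 := cproj_mul 𝒜 q (QH_pow 𝒜 q hπd m) (c - m • d) s'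
    rw [sub_add_cancel] at h2
    rw [zero_add] at h1
    rw [← h1, ← h2, hss]
  have hw : cproj 𝒜 q (c - m • d) s' ∉ p := by
    intro hw
    have h1 : cproj 𝒜 q 0 s * s' = s * cproj 𝒜 q (c - m • d) s' := by
      apply mul_right_cancel₀ (pow_ne_zero m hπ0)
      calc cproj 𝒜 q 0 s * s' * π ^ m = cproj 𝒜 q 0 s * (s * f) := by rw [hss]; ring
        _ = s * (cproj 𝒜 q 0 s * f) := by ring
        _ = _ := by rw [key]; ring
    have h2 : cproj 𝒜 q 0 s * s' ∈ p := by
      rw [h1]; exact p.mul_mem_left _ hw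
    rcases hprime.mem_or_mem h2 with h3 | h3
    · exact hs0 h3
    · exact hs' h3
  refine ⟨m, ?_, cproj 𝒜 q 0 s, _, QH_cproj .., ?_, key⟩
  · by_contra hne
    exact hw (cproj_mem 𝒜 q p h (sub_ne_zero.2 hne) s')
  · intro h0
    exact hs0 (h0 ▸ p.zero_mem)

section Deriv

variable {G : Type*} [AddCommGroup G] [DecidableEq G] {B : Type*} [CommRing B] [IsDomain B]
  (𝒜 : G → AddSubgroup B) [GradedRing 𝒜] {Q : Type*} [AddCommGroup Q] (q : G →+ Q)

theorem fg_mult {k : Type*} [Field k] [Algebra k B] [Algebra.FiniteType k B]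
    (E : Derivation ℤ B B) (hE : ∀ c : k, E (algebraMap k B c) = 0) (π : B)
    (M : Submonoid B) (hM : ∀ x, ∃ s ∈ M, π ∣ s * E x) : ∃ s ∈ M, ∀ x, π ∣ s * E x := by
  obtain ⟨S, hS⟩ := Algebra.FiniteType.out (R := k) (A := B)
  choose s hsM hs using hM
  refine ⟨∏ x ∈ S, s x, M.prod_mem fun x _ => hsM x, fun x => ?_⟩
  have hx : x ∈ Algebra.adjoin k (S : Set B) := hS ▸ Algebra.mem_top
  induction hx using Algebra.adjoin_induction with
  | mem x hx =>
    obtain ⟨y, hy⟩ := Finset.dvd_prod_of_mem s (Finset.mem_coe.1 hx)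
    rw [hy]
    have : s x * y * E x = (s x * E x) * y := by ring
    rw [this]
    exact Dvd.dvd.mul_right (hs x) y
  | algebraMap c => rw [hE]; simp
  | add x y _ _ hx hy => rw [map_add, mul_add]; exact dvd_add hx hy
  | mul x y _ _ hx hy =>
    rw [Derivation.leibniz, smul_eq_mul, smul_eq_mul]
    have : ∀ t : B, t * (x * E y + y * E x) = (t * E y) * x + (t * E x) * y := fun t => by ring
    rw [this]
    exact dvd_add (Dvd.dvd.mul_right hy x) (Dvd.dvd.mul_right hx y)

theorem exists_LND {k : Type*} [Field k] [CharZero k] [Algebra k B] [Algebra.FiniteType k B]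
    (hoverk : ∀ c : k, algebraMap k B c ∈ 𝒜 0)
    (π : B) (d : Q) (hπ0 : π ≠ 0) (hπd : QH 𝒜 q d π)
    (hπ : ∀ (f : B) (c : Q), QH 𝒜 q c f → f ≠ 0 →
      ∃ m : ℕ, c = m • d ∧ ∃ s s' : B, QH 𝒜 q 0 s ∧ s ≠ 0 ∧ s * f = s' * π ^ m)
    (hd : ∀ n : ℕ, 0 < n → n • d ≠ 0) :
    ∃ D : Derivation ℤ B B, IsLND D ∧ ∀ x, D x = 0 ↔ QH 𝒜 q 0 x := by
  classical
  have hinj : ∀ m n : ℕ, m • d = n • d → m = n := by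
    have aux : ∀ m n : ℕ, m < n → m • d ≠ n • d := by
      intro m n hmn h
      apply hd (n - m) (by omega)
      have : n • d = (n - m) • d + m • d := by rw [← add_nsmul]; congr 1; omega
      rw [this] at h
      simpa using h
    intro m n h
    by_contra hne
    rcases lt_or_gt_of_ne hne with h1 | h1
    · exact aux m n h1 h
    · exact aux n m h1 h.symm
  have hCZ : CharZero B := by
    exact charZero_of_injective_algebraMap (algebraMap k B).injective
  let e : G → ℕ := fun i => if h : ∃ m : ℕ, q i = m • d then h.choose else 0
  have he : ∀ i (m : ℕ), q i = m • d → e i = m := by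
    intro i m h
    have hex : ∃ m : ℕ, q i = m • d := ⟨m, h⟩
    have : e i = hex.choose := dif_pos hex
    rw [this]
    exact hinj _ _ (hex.choose_spec.symm.trans h)
  have hq : ∀ i x, x ∈ 𝒜 i → x ≠ 0 → q i = e i • d := by
    intro i x hx hx0
    obtain ⟨m, hm, -⟩ := hπ x (q i) (QH_of_mem 𝒜 q hx) hx0
    rw [he i m hm, hm]
  let w : G → ℤ := fun i => (e i : ℤ)
  have hleib : ∀ x y, wmap 𝒜 w (x * y) = x * wmap 𝒜 w y + y * wmap 𝒜 w x := by
    intro x y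
    induction x using hom_ind 𝒜 with
    | h0 => simp
    | hh i x hx =>
      induction y using hom_ind 𝒜 with
      | h0 => simp
      | hh j y hy =>
        by_cases hx0 : x = 0
        · simp [hx0]
        by_cases hy0 : y = 0
        · simp [hy0]
        have hxy := SetLike.mul_mem_graded hx hy
        rw [wmap_of_mem 𝒜 w hx, wmap_of_mem 𝒜 w hy, wmap_of_mem 𝒜 w hxy]
        have : e (i + j) = e i + e j := by
          apply he
          rw [map_add, hq i x hx hx0, hq j y hy hy0, add_nsmul]
        simp only [w, this]
        simp only [zsmul_eq_mul]
        push_cast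
        ring
      | ha y y' hy hy' => simp only [mul_add, add_mul, map_add, hy, hy']; ring
    | ha x x' hx hx' => simp only [mul_add, add_mul, map_add, hx, hx']; ring
  let E : Derivation ℤ B B := Derivation.mk' (wmap 𝒜 w).toIntLinearMap (by
    intro x y
    simpa using hleib x y)
  have hEw : ∀ x, E x = wmap 𝒜 w x := fun x => rfl
  have hEm : ∀ (m : ℕ) x, QH 𝒜 q (m • d) x → E x = (m : B) * x := by
    intro m x hx
    rw [← hx]
    clear hx
    rw [hEw]
    induction x using hom_ind 𝒜 with
    | h0 => simp
    | hh i x hx =>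
      rw [cproj_of_mem 𝒜 q _ hx]
      split_ifs with h
      · rw [wmap_of_mem 𝒜 w hx]
        simp [w, he i m h]
      · simp
    | ha x y hx hy => simp only [map_add, hx, hy, mul_add]
  have hE0 : ∀ x, E x = 0 ↔ QH 𝒜 q 0 x := by
    intro x
    constructor
    · intro h
      rw [QH_iff]
      intro i hi
      have h1 := decompose_wmap 𝒜 w x i
      rw [← hEw, h] at h1
      have h2 : (w i : ℤ) • (DirectSum.decompose 𝒜 x i : B) = 0 := by
        rw [← h1]; simp
      rw [hq i _ (DirectSum.decompose 𝒜 x i).2 hi]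
      rw [zsmul_eq_mul, mul_eq_zero] at h2
      have h3 : e i = 0 := by
        rcases h2 with h2 | h2
        · simpa [w] using h2
        · exact absurd h2 hi
      rw [h3, zero_nsmul]
    · intro h
      have := hEm 0 x (by simpa using h)
      simpa using this
  let M : Submonoid B :=
    { carrier := {s | QH 𝒜 q 0 s ∧ s ≠ 0}
      one_mem' := ⟨QH_one 𝒜 q, one_ne_zero⟩
      mul_mem' := fun {a b} ha hb => ⟨by simpa using QH_mul 𝒜 q ha.1 hb.1, mul_ne_zero ha.2 hb.2⟩ }
  obtain ⟨a, ⟨haQ, ha0⟩, ha⟩ := fg_mult (k := k) E (by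
      intro c
      rw [hE0]
      simpa using QH_of_mem 𝒜 q (hoverk c)) π M (by
      intro x
      induction x using hom_ind 𝒜 with
      | h0 => exact ⟨1, M.one_mem, by simp⟩
      | hh i x hx =>
        by_cases hx0 : x = 0
        · exact ⟨1, M.one_mem, by simp [hx0]⟩
        obtain ⟨m, hm, s, s', hs, hs0, hss⟩ := hπ x _ (QH_of_mem 𝒜 q hx) hx0
        refine ⟨s, ⟨hs, hs0⟩, ?_⟩
        rw [hEm m x (hm ▸ QH_of_mem 𝒜 q hx)]
        rcases m with _ | m
        · simp
        · refine ⟨((m + 1 : ℕ) : B) * s' * π ^ m, ?_⟩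
          calc s * (((m + 1 : ℕ) : B) * x) = ((m + 1 : ℕ) : B) * (s * x) := by ring
            _ = _ := by rw [hss]; ring
      | ha x y hx hy =>
        obtain ⟨s, hs, hsx⟩ := hx
        obtain ⟨t, ht, hty⟩ := hy
        refine ⟨s * t, M.mul_mem hs ht, ?_⟩
        have : s * t * E (x + y) = (s * E x) * t + (t * E y) * s := by rw [map_add]; ring
        rw [this]
        exact dvd_add (Dvd.dvd.mul_right hsx t) (Dvd.dvd.mul_right hty s))
  choose D0 hD0 using ha
  have hcan : ∀ {u v : B}, π * u = π * v → u = v := fun h => mul_left_cancel₀ hπ0 h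
  let D : Derivation ℤ B B := Derivation.mk'
    (AddMonoidHom.toIntLinearMap
      { toFun := D0
        map_zero' := hcan (by rw [← hD0]; simp)
        map_add' := fun x y => hcan (by
          rw [← hD0, mul_add, ← hD0, ← hD0, map_add, mul_add]) }) (by
      intro x y
      apply hcan
      change π * D0 (x * y) = π * (x * D0 y + y * D0 x)
      rw [← hD0, Derivation.leibniz]
      calc a * (x * E y + y * E x) = x * (a * E y) + y * (a * E x) := by ring
        _ = _ := by rw [hD0, hD0]; ring)
  have hD : ∀ x, a * E x = π * D x := hD0
  refine ⟨D, ?_, ?_⟩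
  · have hit0 : ∀ n, (⇑D)^[n] 0 = 0 := fun n => Function.iterate_fixed (map_zero D) n
    have hnil : ∀ (m : ℕ) x, QH 𝒜 q (m • d) x → (⇑D)^[m + 1] x = 0 := by
      intro m
      induction m with
      | zero =>
        intro x hx
        apply hcan
        simp only [zero_add, Function.iterate_one, mul_zero]
        rw [← hD, (hE0 x).2 (by simpa using hx), mul_zero]
      | succ m ih =>
        intro x hx
        rw [Function.iterate_succ_apply]
        apply ih
        apply QH_of_mul 𝒜 q hπd hπ0
        rw [mul_comm, ← hD, hEm _ x hx, ← succ_nsmul]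
        have h1 : QH 𝒜 q (0 + (m + 1) • d) (a * x) := QH_mul 𝒜 q haQ hx
        rw [zero_add] at h1
        have h2 : a * (((m + 1 : ℕ) : B) * x) = (m + 1) • (a * x) := by
          rw [nsmul_eq_mul]; ring
        rw [h2, QH, map_nsmul, h1]
    intro x
    have hsum : ∀ n (x y : B), (⇑D)^[n] (x + y) = (⇑D)^[n] x + (⇑D)^[n] y := by
      intro n
      induction n with
      | zero => intro x y; rfl
      | succ n ih => intro x y; simp only [Function.iterate_succ_apply, map_add, ih]
    induction x using hom_ind 𝒜 with
    | h0 => exact ⟨1, one_pos, hit0 1⟩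
    | hh i x hx =>
      by_cases hx0 : x = 0
      · exact ⟨1, one_pos, hx0 ▸ hit0 1⟩
      · refine ⟨e i + 1, Nat.succ_pos _, hnil _ _ ?_⟩
        rw [← hq i x hx hx0]
        exact QH_of_mem 𝒜 q hx
    | ha x y hx hy =>
      obtain ⟨n, hn, hx⟩ := hx
      obtain ⟨m, hm, hy⟩ := hy
      refine ⟨n + m, by omega, ?_⟩
      have h1 : (⇑D)^[n + m] x = 0 := by
        rw [add_comm, Function.iterate_add_apply, hx, hit0]
      have h2 : (⇑D)^[n + m] y = 0 := by
        rw [Function.iterate_add_apply, hy, hit0]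
      rw [hsum, h1, h2, add_zero]
  · intro x
    rw [← hE0]
    constructor
    · intro h
      have := hD x
      rw [h, mul_zero] at this
      exact (mul_eq_zero.1 this).resolve_left ha0
    · intro h
      apply hcan
      rw [← hD, h]; simp

end Deriv

section PartA

variable {G : Type*} [AddCommGroup G] [DecidableEq G] {B : Type*} [CommRing B]
  (𝒜 : G → AddSubgroup B) [GradedRing 𝒜]

theorem Mbar_fin {k : Type*} [Field k] [Algebra k B] [Algebra.FiniteType k B]
    (hoverk : ∀ c : k, algebraMap k B c ∈ 𝒜 0) :
    ∃ T : Finset G, ∀ p : Ideal B, ∃ T' : Finset G, T' ⊆ T ∧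
      Mbar 𝒜 p = AddSubgroup.closure (T' : Set G) := by
  classical
  obtain ⟨S, hS⟩ := Algebra.FiniteType.out (R := k) (A := B)
  refine ⟨S.biUnion fun x => (DirectSum.decompose 𝒜 x).support, fun p => ?_⟩
  set T := S.biUnion fun x => (DirectSum.decompose 𝒜 x).support with hT
  refine ⟨T.filter (fun i => ¬ (𝒜 i : Set B) ⊆ (p : Set B)), Finset.filter_subset _ _, ?_⟩
  set T' := T.filter (fun i => ¬ (𝒜 i : Set B) ⊆ (p : Set B)) with hT'
  have key : ∀ (x : B), ∀ i ∉ AddSubgroup.closure (T' : Set G),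
      (DirectSum.decompose 𝒜 x i : B) ∈ p := by
    intro x
    have hx : x ∈ Algebra.adjoin k (S : Set B) := hS ▸ Algebra.mem_top
    induction hx using Algebra.adjoin_induction with
    | mem x hx =>
      intro i hi
      by_cases h0 : DirectSum.decompose 𝒜 x i = 0
      · rw [h0]; simp
      by_cases h1 : (𝒜 i : Set B) ⊆ (p : Set B)
      · exact h1 (DirectSum.decompose 𝒜 x i).2
      · exfalso
        apply hi
        apply AddSubgroup.subset_closure
        rw [hT', Finset.coe_filter]
        refine ⟨?_, h1⟩
        rw [hT, Finset.mem_biUnion]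
        exact ⟨x, hx, DFinsupp.mem_support_iff.2 h0⟩
    | algebraMap c =>
      intro i hi
      rw [DirectSum.decompose_of_mem_ne 𝒜 (hoverk c)]
      · exact p.zero_mem
      · rintro rfl
        exact hi (zero_mem _)
    | add x y _ _ hx hy =>
      intro i hi
      rw [DirectSum.decompose_add]
      exact p.add_mem (hx i hi) (hy i hi)
    | mul x y _ _ hx hy =>
      intro i hi
      rw [DirectSum.decompose_mul, DirectSum.coe_mul_apply]
      refine p.sum_mem fun jl hjl => ?_
      obtain ⟨-, hjl⟩ := Finset.mem_filter.1 hjl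
      by_cases hj : jl.1 ∈ AddSubgroup.closure (T' : Set G)
      · refine p.mul_mem_left _ (hy _ fun hl => hi ?_)
        rw [← hjl]
        exact add_mem hj hl
      · exact p.mul_mem_right _ (hx _ hj)
  apply le_antisymm
  · rw [Mbar, AddSubgroup.closure_le]
    intro i hi
    by_contra hc
    apply hi
    intro x hx
    have := key x i hc
    rwa [DirectSum.decompose_of_mem_same 𝒜 hx] at this
  · rw [Mbar]
    apply AddSubgroup.closure_mono
    intro i hi
    rw [hT', Finset.coe_filter] at hi
    exact hi.2

theorem Gsub_eq : Gsub 𝒜 = Mbar 𝒜 ⊥ := by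
  unfold Gsub Mbar
  congr 1
  ext i
  change 𝒜 i ≠ ⊥ ↔ ¬ _
  rw [ne_eq, not_iff_not]
  constructor
  · intro h x hx
    rw [h] at hx
    simpa using hx
  · intro h
    rw [eq_bot_iff]
    intro x hx
    have := h hx
    simpa using this

theorem Mbar_le (p : Ideal B) : Mbar 𝒜 p ≤ Gsub 𝒜 := by
  rw [Gsub_eq]
  apply AddSubgroup.closure_mono
  intro i hi h
  apply hi
  intro x hx
  have h1 : x = 0 := by simpa using h hx
  rw [h1]
  exact p.zero_mem

theorem mem_Gsub {i : G} {x : B} (hx : x ∈ 𝒜 i) (hx0 : x ≠ 0) : i ∈ Gsub 𝒜 := by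
  apply AddSubgroup.subset_closure
  intro h
  rw [h] at hx
  exact hx0 (by simpa using hx)

theorem dicho [IsDomain B] [IsIntegrallyClosed B] {k : Type*} [Field k] [CharZero k] [Algebra k B]
    [Algebra.FiniteType k B] (hoverk : ∀ c : k, algebraMap k B c ∈ 𝒜 0) (p : Ideal B)
    (hp : heightOne p) :
    (∃ n : ℕ, 0 < n ∧ ∀ g ∈ Gsub 𝒜, n • g ∈ Mbar 𝒜 p) ∨
    ((∃ D : Derivation ℤ B B, IsLND D ∧ ∀ x, D x = 0 ↔ x ∈ verSub 𝒜 (Mbar 𝒜 p)) ∧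
      ∀ g ∈ Gsub 𝒜, ∀ n : ℕ, 0 < n → n • g ∈ Mbar 𝒜 p → g ∈ Mbar 𝒜 p) := by
  have : IsNoetherianRing B := Algebra.FiniteType.isNoetherianRing k B
  have hker : ∀ g, QuotientAddGroup.mk' (Mbar 𝒜 p) g = 0 ↔ g ∈ Mbar 𝒜 p := fun g =>
    QuotientAddGroup.eq_zero_iff g
  obtain ⟨π, d, hπ0, hπd, hπ⟩ := local_struct 𝒜 (QuotientAddGroup.mk' (Mbar 𝒜 p)) p hp (by
    intro i hi x hx
    by_contra hxp
    apply hi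
    rw [hker]
    exact AddSubgroup.subset_closure fun h => hxp (h hx))
  have hG : ∀ g ∈ Gsub 𝒜, ∃ z : ℤ, QuotientAddGroup.mk' (Mbar 𝒜 p) g = z • d := by
    intro g hg
    induction hg using AddSubgroup.closure_induction with
    | mem i hi =>
      obtain ⟨x, hx, hx0⟩ := ((𝒜 i).ne_bot_iff_exists_ne_zero.1 hi) |> fun ⟨x, hx⟩ =>
        (⟨x.1, x.2, fun h => hx (Subtype.ext h)⟩ : ∃ x, x ∈ 𝒜 i ∧ x ≠ 0)
      obtain ⟨m, hm, -⟩ := hπ x _ (QH_of_mem _ _ hx) hx0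
      exact ⟨m, by rw [hm, natCast_zsmul]⟩
    | zero => exact ⟨0, by simp⟩
    | add x y _ _ hx hy =>
      obtain ⟨a, ha⟩ := hx
      obtain ⟨b, hb⟩ := hy
      exact ⟨a + b, by rw [map_add, ha, hb, add_zsmul]⟩
    | neg x _ hx =>
      obtain ⟨a, ha⟩ := hx
      exact ⟨-a, by rw [map_neg, ha, neg_zsmul]⟩
  by_cases hd : ∃ n : ℕ, 0 < n ∧ n • d = 0
  · left
    obtain ⟨n, hn, hnd⟩ := hd
    refine ⟨n, hn, fun g hg => ?_⟩
    obtain ⟨z, hz⟩ := hG g hg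
    rw [← hker, map_nsmul, hz, smul_comm, hnd, smul_zero]
  · right
    push Not at hd
    constructor
    · obtain ⟨D, hD, hDx⟩ := exists_LND 𝒜 _ hoverk π d hπ0 hπd hπ hd
      exact ⟨D, hD, fun x => by rw [hDx, mem_verSub_iff]⟩
    · intro g hg n hn hng
      obtain ⟨z, hz⟩ := hG g hg
      rw [← hker, map_nsmul, hz] at hng
      rw [← hker, hz]
      have h1 : (n * z.natAbs) • d = 0 := by
        rw [mul_nsmul', ← natCast_zsmul d, Int.natCast_natAbs]
        rcases abs_choice z with h | h <;> rw [h]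
        · exact hng
        · rw [neg_zsmul, smul_neg, hng, neg_zero]
      by_contra hne
      apply hd (n * z.natAbs) _ h1
      have : z ≠ 0 := by rintro rfl; simp at hne
      have := Int.natAbs_pos.2 this
      positivity

theorem mem_W [IsDomain B] [IsIntegrallyClosed B] {k : Type*} [Field k] [CharZero k] [Algebra k B]
    [Algebra.FiniteType k B] (hoverk : ∀ c : k, algebraMap k B c ∈ 𝒜 0)
    (hex : ∃ p : Ideal B, heightOne p) {g : G} (hg : g ∈ Gsub 𝒜)
    (h : ∀ p : Ideal B, heightOne p → ∃ n : ℕ, 0 < n ∧ n • g ∈ Mbar 𝒜 p) :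
    g ∈ torc (Gbar 𝒜) (Gsub 𝒜) := by
  classical
  refine ⟨hg, ?_⟩
  obtain ⟨T, hT⟩ := Mbar_fin 𝒜 hoverk
  have hn : ∀ T' : Finset G, ∃ n : ℕ, 0 < n ∧ ((∃ p : Ideal B, heightOne p ∧
      Mbar 𝒜 p = AddSubgroup.closure (T' : Set G)) → n • g ∈ AddSubgroup.closure (T' : Set G)) := by
    intro T'
    by_cases hc : ∃ p : Ideal B, heightOne p ∧ Mbar 𝒜 p = AddSubgroup.closure (T' : Set G)
    · obtain ⟨p, hp, hpT⟩ := hc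
      obtain ⟨n, hn, hng⟩ := h p hp
      exact ⟨n, hn, fun _ => hpT ▸ hng⟩
    · exact ⟨1, one_pos, fun h => absurd h hc⟩
  choose n hn0 hn using hn
  refine ⟨∏ T' ∈ T.powerset, n T', Finset.prod_pos fun T' _ => hn0 T', ?_⟩
  rw [Gbar, if_pos hex, AddSubgroup.mem_iInf]
  rintro ⟨p, hp⟩
  obtain ⟨T', hT'T, hT'⟩ := hT p
  obtain ⟨m, hm⟩ := Finset.dvd_prod_of_mem n (Finset.mem_powerset.2 hT'T)
  rw [hm, mul_comm, mul_nsmul']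
  apply AddSubgroup.nsmul_mem
  change n T' • g ∈ Mbar 𝒜 p
  rw [hT']
  exact hn T' ⟨p, hp, hT'⟩

theorem part_a [IsDomain B] [IsIntegrallyClosed B] {k : Type*} [Field k] [CharZero k] [Algebra k B]
    [Algebra.FiniteType k B] (hoverk : ∀ c : k, algebraMap k B c ∈ 𝒜 0)
    (hex : ∃ p : Ideal B, heightOne p) (x : B)
    (hx : ∀ D : Derivation ℤ B B, IsLND D →
      (∀ y ∈ verSub 𝒜 (torc (Gbar 𝒜) (Gsub 𝒜)), D y = 0) → D x = 0) :
    x ∈ verSub 𝒜 (torc (Gbar 𝒜) (Gsub 𝒜)) := by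
  have hker : ∀ (H : AddSubgroup G) g, QuotientAddGroup.mk' H g = 0 ↔ g ∈ H := fun H g =>
    QuotientAddGroup.eq_zero_iff g
  rw [mem_verSub_iff, QH_iff]
  intro i hi
  rw [hker]
  have hiG : i ∈ Gsub 𝒜 := mem_Gsub 𝒜 (DirectSum.decompose 𝒜 x i).2 hi
  refine mem_W 𝒜 hoverk hex hiG ?_
  intro p hp
  rcases dicho 𝒜 hoverk p hp with ⟨n, hn, h⟩ | ⟨⟨D, hD, hDx⟩, htor⟩
  · exact ⟨n, hn, h i hiG⟩
  · refine ⟨1, one_pos, ?_⟩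
    rw [one_nsmul]
    have h1 : D x = 0 := by
      apply hx D hD
      intro y hy
      rw [hDx, mem_verSub_iff, QH_iff]
      rw [mem_verSub_iff, QH_iff] at hy
      intro j hj
      have h2 := hy j hj
      rw [hker] at h2 ⊢
      obtain ⟨hjG, n, hn, hnj⟩ := h2
      rw [Gbar, if_pos hex, AddSubgroup.mem_iInf] at hnj
      exact htor j hjG n hn (hnj ⟨p, hp⟩)
    rw [hDx, mem_verSub_iff, QH_iff] at h1
    exact (hker _ _).1 (h1 i hi)

end PartA

section PartB

variable {G : Type*} [AddCommGroup G] [DecidableEq G] {B : Type*} [CommRing B] [IsDomain B]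
  (𝒜 : G → AddSubgroup B) [GradedRing 𝒜] {Q : Type*} [AddCommGroup Q] (q : G →+ Q)

/-- Homogeneous fractions of degree `c` for the coarsened grading. -/
def FH (c : Q) (z : FractionRing B) : Prop :=
  ∃ (a : Q) (X Y : B), QH 𝒜 q (a + c) X ∧ QH 𝒜 q a Y ∧ Y ≠ 0 ∧
    z * algebraMap B (FractionRing B) Y = algebraMap B (FractionRing B) X

theorem algebraMap_FR_ne {y : B} (hy : y ≠ 0) : algebraMap B (FractionRing B) y ≠ 0 := by
  intro h
  exact hy (IsFractionRing.injective B (FractionRing B) (by rw [h, map_zero]))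

theorem FH_of_QH {c : Q} {x : B} (hx : QH 𝒜 q c x) : FH 𝒜 q c (algebraMap B (FractionRing B) x) :=
  ⟨0, x, 1, by simpa using hx, QH_one 𝒜 q, one_ne_zero, by simp⟩

theorem FH_mul {c e : Q} {z w : FractionRing B} (hz : FH 𝒜 q c z) (hw : FH 𝒜 q e w) :
    FH 𝒜 q (c + e) (z * w) := by
  obtain ⟨a, X, Y, hX, hY, hY0, h⟩ := hz
  obtain ⟨a', X', Y', hX', hY', hY0', h'⟩ := hw
  refine ⟨a + a', X * X', Y * Y', ?_, QH_mul 𝒜 q hY hY', mul_ne_zero hY0 hY0', ?_⟩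
  · rw [add_add_add_comm]
    exact QH_mul 𝒜 q hX hX'
  · rw [map_mul, map_mul, ← h, ← h']; ring

theorem FH_add {c : Q} {z w : FractionRing B} (hz : FH 𝒜 q c z) (hw : FH 𝒜 q c w) :
    FH 𝒜 q c (z + w) := by
  obtain ⟨a, X, Y, hX, hY, hY0, h⟩ := hz
  obtain ⟨a', X', Y', hX', hY', hY0', h'⟩ := hw
  refine ⟨a + a', X * Y' + X' * Y, Y * Y', ?_, QH_mul 𝒜 q hY hY', mul_ne_zero hY0 hY0', ?_⟩
  · have h1 := QH_mul 𝒜 q hX hY'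
    have h2 := QH_mul 𝒜 q hX' hY
    have e1 : a + c + a' = a + a' + c := by abel
    have e2 : a' + c + a = a + a' + c := by abel
    rw [e1] at h1
    rw [e2] at h2
    exact QH_add 𝒜 q h1 h2
  · rw [map_mul, map_add, map_mul, map_mul, ← h, ← h']; ring

theorem FH_neg {c : Q} {z : FractionRing B} (hz : FH 𝒜 q c z) : FH 𝒜 q c (-z) := by
  obtain ⟨a, X, Y, hX, hY, hY0, h⟩ := hz
  exact ⟨a, -X, Y, QH_neg 𝒜 q hX, hY, hY0, by rw [map_neg, ← h]; ring⟩

theorem FH_zero (c : Q) : FH 𝒜 q c (0 : FractionRing B) := by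
  simpa using FH_of_QH 𝒜 q (QH_zero 𝒜 q c)

theorem FH_one : FH 𝒜 q 0 (1 : FractionRing B) := by
  simpa using FH_of_QH 𝒜 q (QH_one 𝒜 q)

theorem FH_inv {c : Q} {z : FractionRing B} (hz : FH 𝒜 q c z) : FH 𝒜 q (-c) z⁻¹ := by
  by_cases hz0 : z = 0
  · rw [hz0, inv_zero]; exact FH_zero 𝒜 q _
  obtain ⟨a, X, Y, hX, hY, hY0, h⟩ := hz
  have hX0 : X ≠ 0 := by
    rintro rfl
    rw [map_zero] at h
    exact mul_ne_zero hz0 (algebraMap_FR_ne hY0) h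
  refine ⟨a + c, Y, X, by simpa using hY, hX, hX0, ?_⟩
  rw [← h, inv_mul_cancel_left₀ hz0]

theorem FH_pow {c : Q} {z : FractionRing B} (hz : FH 𝒜 q c z) (n : ℕ) :
    FH 𝒜 q (n • c) (z ^ n) := by
  induction n with
  | zero => simpa using FH_one 𝒜 q
  | succ n ih => rw [succ_nsmul, pow_succ]; exact FH_mul 𝒜 q ih hz

theorem FH_zpow {c : Q} {z : FractionRing B} (hz : FH 𝒜 q c z) (n : ℤ) :
    FH 𝒜 q (n • c) (z ^ n) := by
  cases n with
  | ofNat n => simpa using FH_pow 𝒜 q hz n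
  | negSucc n =>
    rw [negSucc_zsmul, zpow_negSucc]
    exact FH_inv 𝒜 q (FH_pow 𝒜 q hz _)

theorem FH_prod {ι : Type*} (s : Finset ι) (c : ι → Q) (z : ι → FractionRing B)
    (h : ∀ i ∈ s, FH 𝒜 q (c i) (z i)) : FH 𝒜 q (∑ i ∈ s, c i) (∏ i ∈ s, z i) := by
  classical
  induction s using Finset.induction_on with
  | empty => simpa using FH_one 𝒜 q
  | insert i s hi ih =>
    rw [Finset.sum_insert hi, Finset.prod_insert hi]
    exact FH_mul 𝒜 q (h i (Finset.mem_insert_self _ _))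
      (ih fun j hj => h j (Finset.mem_insert_of_mem hj))

theorem FH_common {ι : Type*} (s : Finset ι) (c : ι → Q) (z : ι → FractionRing B)
    (h : ∀ i ∈ s, FH 𝒜 q (c i) (z i)) : ∃ (a : Q) (Y : B), QH 𝒜 q a Y ∧ Y ≠ 0 ∧
      ∀ i ∈ s, ∃ X, QH 𝒜 q (a + c i) X ∧
        z i * algebraMap B (FractionRing B) Y = algebraMap B (FractionRing B) X := by
  classical
  induction s using Finset.induction_on with
  | empty => exact ⟨0, 1, QH_one 𝒜 q, one_ne_zero, by simp⟩
  | insert i s hi ih =>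
    obtain ⟨a, Y, hY, hY0, hs⟩ := ih fun j hj => h j (Finset.mem_insert_of_mem hj)
    obtain ⟨a', X', Y', hX', hY', hY0', h'⟩ := h i (Finset.mem_insert_self _ _)
    refine ⟨a + a', Y * Y', QH_mul 𝒜 q hY hY', mul_ne_zero hY0 hY0', ?_⟩
    intro j hj
    rcases Finset.mem_insert.1 hj with rfl | hj
    · refine ⟨Y * X', ?_, ?_⟩
      · rw [add_assoc]; exact QH_mul 𝒜 q hY hX'
      · rw [map_mul, map_mul, ← h']; ring
    · obtain ⟨X, hX, hXe⟩ := hs j hj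
      refine ⟨X * Y', ?_, ?_⟩
      · rw [add_right_comm]; exact QH_mul 𝒜 q hX hY'
      · rw [map_mul, map_mul, ← hXe]; ring

theorem FH_indep {ι : Type*} (s : Finset ι) (c : ι → Q) (z : ι → FractionRing B)
    (h : ∀ i ∈ s, FH 𝒜 q (c i) (z i)) (hc : ∀ i ∈ s, ∀ j ∈ s, c i = c j → i = j)
    (hsum : ∑ i ∈ s, z i = 0) : ∀ i ∈ s, z i = 0 := by
  classical
  obtain ⟨a, Y, hY, hY0, hs⟩ := FH_common 𝒜 q s c z h
  choose! X hX hXe using hs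
  have h0 : ∑ i ∈ s, X i = 0 := by
    apply IsFractionRing.injective B (FractionRing B)
    rw [map_sum, map_zero, ← Finset.sum_congr rfl hXe, ← Finset.sum_mul, hsum, zero_mul]
  intro i hi
  have h1 : X i = 0 := by
    have h2 := congrArg (cproj 𝒜 q (a + c i)) h0
    rw [map_sum, map_zero, Finset.sum_eq_single i] at h2
    · rw [← h2]; exact (hX i hi).symm
    · intro j hj hji
      apply cproj_of_QH_ne 𝒜 q (hX j hj)
      intro he
      exact hji (hc j hj i hi (add_left_cancel he).symm)
    · intro hn; exact absurd hi hn
  have h3 := hXe i hi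
  rw [h1, map_zero] at h3
  exact (mul_eq_zero.1 h3).resolve_right (algebraMap_FR_ne hY0)

/-- The field of homogeneous fractions of degree zero. -/
def FH0 : Subfield (FractionRing B) where
  carrier := {z | FH 𝒜 q 0 z}
  mul_mem' := fun {a b} ha hb => by
    have := FH_mul 𝒜 q ha hb
    rwa [add_zero] at this
  one_mem' := FH_one 𝒜 q
  add_mem' := fun {a b} ha hb => FH_add 𝒜 q ha hb
  zero_mem' := FH_zero 𝒜 q 0
  neg_mem' := fun {a} ha => FH_neg 𝒜 q ha
  inv_mem' := fun a ha => by
    have := FH_inv 𝒜 q ha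
    rwa [neg_zero] at this

theorem FH_exists {g : G} (hg : g ∈ Gsub 𝒜) : ∃ z : FractionRing B, z ≠ 0 ∧ FH 𝒜 q (q g) z := by
  induction hg using AddSubgroup.closure_induction with
  | mem i hi =>
    obtain ⟨x, hx⟩ := (𝒜 i).ne_bot_iff_exists_ne_zero.1 hi
    exact ⟨algebraMap B _ x.1, algebraMap_FR_ne fun h => hx (Subtype.ext h),
      FH_of_QH 𝒜 q (QH_of_mem 𝒜 q x.2)⟩
  | zero => exact ⟨1, one_ne_zero, by simpa using FH_one 𝒜 q⟩
  | add x y _ _ hx hy =>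
    obtain ⟨z, hz0, hz⟩ := hx
    obtain ⟨w, hw0, hw⟩ := hy
    exact ⟨z * w, mul_ne_zero hz0 hw0, by rw [map_add]; exact FH_mul 𝒜 q hz hw⟩
  | neg x _ hx =>
    obtain ⟨z, hz0, hz⟩ := hx
    exact ⟨z⁻¹, inv_ne_zero hz0, by rw [map_neg]; exact FH_inv 𝒜 q hz⟩

theorem part_b {r : ℕ} (e : Fin r → G) (heG : ∀ l, e l ∈ Gsub 𝒜)
    (hind : ∀ n : Fin r → ℤ, ∑ l, n l • q (e l) = 0 → n = 0)
    (hspan : ∀ g ∈ Gsub 𝒜, ∃ n : Fin r → ℤ, q g = ∑ l, n l • q (e l)) :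
    ∃ t : Fin r → FractionRing B,
      (∀ p : MvPolynomial (Fin r) (FH0 𝒜 q),
        MvPolynomial.eval₂ (FH0 𝒜 q).subtype t p = 0 → p = 0) ∧
      Subfield.closure ((FH0 𝒜 q : Set (FractionRing B)) ∪ Set.range t) = ⊤ := by
  choose t ht0 ht using fun l => FH_exists 𝒜 q (heG l)
  refine ⟨t, ?_, ?_⟩
  · intro p hp
    rw [MvPolynomial.eval₂_eq'] at hp
    have h1 := FH_indep 𝒜 q p.support (fun m => ∑ l, m l • q (e l)) _ (by
      intro m hm
      have h2 : FH 𝒜 q 0 ((FH0 𝒜 q).subtype (MvPolynomial.coeff m p)) :=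
        (MvPolynomial.coeff m p).2
      have h3 := FH_prod 𝒜 q Finset.univ (fun l => m l • q (e l)) (fun l => t l ^ m l)
        (fun l _ => FH_pow 𝒜 q (ht l) _)
      have h4 := FH_mul 𝒜 q h2 h3
      rw [zero_add] at h4
      exact h4) (by
      intro m _ m' _ hmm
      have h2 := hind (fun l => (m l : ℤ) - m' l) (by
        simp only [sub_smul, natCast_zsmul, Finset.sum_sub_distrib]
        rw [sub_eq_zero]; exact hmm)
      ext l
      have := congrFun h2 l
      simp only [Pi.zero_apply] at this
      omega) hp
    by_contra hne
    obtain ⟨m, hm⟩ := MvPolynomial.support_nonempty.2 hne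
    have h2 := h1 m hm
    rcases mul_eq_zero.1 h2 with h3 | h3
    · rw [MvPolynomial.mem_support_iff] at hm
      apply hm
      exact Subtype.ext h3
    · rw [Finset.prod_eq_zero_iff] at h3
      obtain ⟨l, -, hl⟩ := h3
      exact pow_ne_zero _ (ht0 l) hl
  · rw [eq_top_iff]
    set L := Subfield.closure ((FH0 𝒜 q : Set (FractionRing B)) ∪ Set.range t) with hL
    have hB : ∀ x : B, algebraMap B (FractionRing B) x ∈ L := by
      intro x
      induction x using hom_ind 𝒜 with
      | h0 => rw [map_zero]; exact zero_mem _
      | hh i x hx =>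
        by_cases hx0 : x = 0
        · rw [hx0, map_zero]; exact zero_mem _
        obtain ⟨n, hn⟩ := hspan i (mem_Gsub 𝒜 hx hx0)
        have h3 := FH_prod 𝒜 q Finset.univ (fun l => n l • q (e l)) (fun l => t l ^ n l)
          (fun l _ => FH_zpow 𝒜 q (ht l) _)
        rw [← hn] at h3
        have hu0 : (∏ l, t l ^ n l) ≠ 0 := Finset.prod_ne_zero_iff.2 fun l _ => zpow_ne_zero _ (ht0 l)
        have h4 := FH_mul 𝒜 q (FH_of_QH 𝒜 q (QH_of_mem 𝒜 q hx)) (FH_inv 𝒜 q h3)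
        rw [add_neg_cancel] at h4
        have h5 : algebraMap B (FractionRing B) x * (∏ l, t l ^ n l)⁻¹ ∈ L :=
          Subfield.subset_closure (Or.inl h4)
        have h6 : (∏ l, t l ^ n l) ∈ L :=
          prod_mem fun l _ => by
            have h8 : t l ∈ L := Subfield.subset_closure (Or.inr ⟨l, rfl⟩)
            exact zpow_mem h8 _
        have h7 := mul_mem h5 h6
        rwa [inv_mul_cancel_right₀ hu0] at h7
      | ha x y hx hy => rw [map_add]; exact add_mem hx hy
    intro z _
    obtain ⟨x, y, -, rfl⟩ := IsFractionRing.div_surjective (A := B) z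
    exact div_mem (hB x) (hB y)

end PartB

theorem rank_int_congr {X : Type*} [AddCommGroup X] (i j : Module ℤ X) :
    @Module.rank ℤ X _ _ i = @Module.rank ℤ X _ _ j := by
  rw [Subsingleton.elim i j]

theorem lattice {G : Type*} [AddCommGroup G] (P H : AddSubgroup G) (hfg : P.FG) (r : ℕ)
    (hr : Module.rank ℚ (ℚ ⊗[ℤ] (P ⧸ (H.addSubgroupOf P))) = r) :
    ∃ e : Fin r → G, (∀ l, e l ∈ P) ∧
      (∀ n : Fin r → ℤ, ∑ l, n l • e l ∈ torc H P → n = 0) ∧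
      (∀ g ∈ P, ∃ n : Fin r → ℤ, g - ∑ l, n l • e l ∈ torc H P) := by
  have hP : Module.Finite ℤ P := by
    rw [Module.Finite.iff_addGroup_fg]
    exact (AddGroup.fg_iff_addSubgroup_fg P).2 hfg
  have hPA : Module.Finite ℤ (P ⧸ (H.addSubgroupOf P)) :=
    Module.Finite.of_surjective (QuotientAddGroup.mk' (H.addSubgroupOf P)).toIntLinearMap
      (QuotientAddGroup.mk'_surjective _)
  set A := P ⧸ (H.addSubgroupOf P) with hA
  have h1 : Module.rank ℤ A = r := by
    have hl : IsLocalizedModule (nonZeroDivisors ℤ) (TensorProduct.mk ℤ ℚ A 1) :=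
      (isLocalizedModule_iff_isBaseChange (nonZeroDivisors ℤ) ℚ _).2
        (TensorProduct.isBaseChange ℤ A ℚ)
    have e1 := IsLocalizedModule.rank_eq (nonZeroDivisors ℤ) le_rfl (TensorProduct.mk ℤ ℚ A 1)
    have e2 : Module.rank ℚ (ℚ ⊗[ℤ] A) = Module.rank ℤ (ℚ ⊗[ℤ] A) :=
      IsLocalization.rank_eq ℚ (nonZeroDivisors ℤ) le_rfl
    rw [← e1]
    exact (rank_int_congr _ _).trans (e2.symm.trans hr)
  have h2 : Module.rank ℤ (A ⧸ Submodule.torsion ℤ A) = r := by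
    rw [rank_quotient_eq_of_le_torsion le_rfl, h1]
  have h3 : Module.finrank ℤ (A ⧸ Submodule.torsion ℤ A) = r := by
    rw [Module.finrank, h2]; simp
  let b := (Module.finBasisOfFinrankEq ℤ (A ⧸ Submodule.torsion ℤ A) h3)
  let f : P →ₗ[ℤ] (A ⧸ Submodule.torsion ℤ A) := (Submodule.mkQ _).comp
    (QuotientAddGroup.mk' (H.addSubgroupOf P)).toIntLinearMap
  have hf : Function.Surjective f :=
    (Submodule.mkQ_surjective _).comp (QuotientAddGroup.mk'_surjective _)
  have hker : ∀ x : P, f x = 0 ↔ (x : G) ∈ torc H P := by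
    intro x
    change Submodule.Quotient.mk (QuotientAddGroup.mk' (H.addSubgroupOf P) x) = 0 ↔ _
    rw [Submodule.Quotient.mk_eq_zero, Submodule.mem_torsion_iff]
    constructor
    · rintro ⟨a, ha⟩
      have ha' : QuotientAddGroup.mk' (H.addSubgroupOf P) ((a : ℤ) • x) = 0 := by
        rw [map_zsmul]; exact ha
      have h5 : ((a : ℤ) • x) ∈ H.addSubgroupOf P := (QuotientAddGroup.eq_zero_iff _).1 ha'
      have h6 : (a : ℤ) • (x : G) ∈ H := by
        simpa [AddSubgroup.mem_addSubgroupOf] using h5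
      refine ⟨x.2, (a : ℤ).natAbs, Int.natAbs_pos.2 (nonZeroDivisors.ne_zero a.2), ?_⟩
      rw [← natCast_zsmul]
      rcases Int.natAbs_eq (a : ℤ) with h | h
      · rw [← h]; exact h6
      · have h7 : ((a : ℤ).natAbs : ℤ) = -(a : ℤ) := by omega
        rw [h7, neg_smul]; exact H.neg_mem h6
    · rintro ⟨-, n, hn, hx⟩
      refine ⟨⟨(n : ℤ), mem_nonZeroDivisors_of_ne_zero (by omega)⟩, ?_⟩
      change (n : ℤ) • QuotientAddGroup.mk' (H.addSubgroupOf P) x = 0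
      rw [← map_zsmul]
      refine (QuotientAddGroup.eq_zero_iff _).2 ?_
      rw [AddSubgroup.mem_addSubgroupOf]
      simpa using hx
  choose e he using fun l => hf (b l)
  refine ⟨fun l => e l, fun l => (e l).2, ?_, ?_⟩
  · intro n hn
    have h4 : f (∑ l, n l • e l) = 0 := by
      rw [hker]; simpa using hn
    simp only [map_sum, map_smul, he] at h4
    funext l
    exact Fintype.linearIndependent_iff.1 b.linearIndependent n h4 l
  · intro g hg
    refine ⟨fun l => b.repr (f ⟨g, hg⟩) l, ?_⟩
    have h4 : f (⟨g, hg⟩ - ∑ l, b.repr (f ⟨g, hg⟩) l • e l) = 0 := by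
      simp only [map_sub, map_sum, map_smul, he]
      rw [b.sum_repr, sub_self]
    rw [hker] at h4
    simpa using h4


/-- Let k be a field of characteristic 0 and B a normal affine k-domain graded over k
by an abelian group G.  Assume 𝔾(B)/𝔾̄(B) is not torsion, let r be its rank (the
dimension of ℚ ⊗_ℤ (𝔾(B)/𝔾̄(B))) and W = torc(𝔾̄(B), 𝔾(B)).  Then:
(a) there is a set Δ of locally nilpotent derivations of B with ⋂_{D ∈ Δ} ker D = B^{(W)};
(b) there is a subfield K of Frac(B) with ML(B) ⊆ B^{(W)}, B^{(W)} ⊆ K, such that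
    Frac(B) is purely transcendental over K of transcendence degree r (i.e. Frac(B) is
    generated over K by r algebraically independent elements); in particular there are
    r elements of Frac(B) algebraically independent over the subfield generated by the
    image of ML(B);
(c) B is non-rigid. -/
theorem trdeg_ML_ge_rank
    {k : Type*} [Field k] [CharZero k]
    {G : Type*} [AddCommGroup G] [DecidableEq G]
    {B : Type*} [CommRing B] [IsDomain B] [IsIntegrallyClosed B]
    [Algebra k B] [Algebra.FiniteType k B]
    (𝒜 : G → AddSubgroup B) [GradedRing 𝒜]
    (hoverk : ∀ c : k, algebraMap k B c ∈ 𝒜 0)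
    (hnotors : ∃ g ∈ Gsub 𝒜, ∀ n : ℕ, 0 < n → ¬ n • g ∈ Gbar 𝒜)
    (r : ℕ)
    (hr : Module.rank ℚ (ℚ ⊗[ℤ]
      ((Gsub 𝒜) ⧸ ((Gbar 𝒜).addSubgroupOf (Gsub 𝒜)))) = r) :
    (∃ Δ : Set (Derivation ℤ B B), (∀ D ∈ Δ, IsLND D) ∧
      { x : B | ∀ D ∈ Δ, D x = 0 } = (verSub 𝒜 (torc (Gbar 𝒜) (Gsub 𝒜)) : Set B)) ∧
    (∃ K : Subfield (FractionRing B),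
      MLset (B := B) ⊆ (verSub 𝒜 (torc (Gbar 𝒜) (Gsub 𝒜)) : Set B) ∧
      (algebraMap B (FractionRing B)) '' (verSub 𝒜 (torc (Gbar 𝒜) (Gsub 𝒜))) ⊆ K ∧
      ∃ t : Fin r → FractionRing B,
        (∀ p : MvPolynomial (Fin r) K, MvPolynomial.eval₂ K.subtype t p = 0 → p = 0) ∧
        Subfield.closure ((K : Set (FractionRing B)) ∪ Set.range t) = ⊤) ∧
    (∃ D : Derivation ℤ B B, IsLND D ∧ D ≠ 0) := by
  have hex : ∃ p : Ideal B, heightOne p := by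
    by_contra h
    obtain ⟨g, hg, hg'⟩ := hnotors
    apply hg' 1 one_pos
    rw [one_smul, Gbar, if_neg h]
    exact hg
  have hA := part_a 𝒜 hoverk hex
  refine ⟨⟨{D | IsLND D ∧ ∀ y ∈ verSub 𝒜 (torc (Gbar 𝒜) (Gsub 𝒜)), D y = 0},
    fun D hD => hD.1, ?_⟩, ?_, ?_⟩
  · ext x
    constructor
    · intro hx
      exact hA x fun D hD hD' => hx D ⟨hD, hD'⟩
    · intro hx D hD
      exact hD.2 x hx
  · have hfg : (Gsub 𝒜).FG := by
      obtain ⟨T, hT⟩ := Mbar_fin 𝒜 hoverk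
      obtain ⟨T', -, hT'⟩ := hT ⊥
      exact ⟨T', by rw [Gsub_eq, hT']⟩
    obtain ⟨e, he, hi, hs⟩ := lattice (Gsub 𝒜) (Gbar 𝒜) hfg r hr
    refine ⟨FH0 𝒜 (QuotientAddGroup.mk' (torc (Gbar 𝒜) (Gsub 𝒜))), ?_, ?_, ?_⟩
    · intro x hx
      exact hA x fun D hD _ => hx D hD
    · rintro _ ⟨x, hx, rfl⟩
      exact FH_of_QH 𝒜 _ ((mem_verSub_iff 𝒜 _ x).1 hx)
    · refine part_b 𝒜 _ e he ?_ ?_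
      · intro n hn
        apply hi n
        refine (QuotientAddGroup.eq_zero_iff _).1 ?_
        change QuotientAddGroup.mk' (torc (Gbar 𝒜) (Gsub 𝒜)) _ = 0
        rw [map_sum, ← hn]
        exact Finset.sum_congr rfl fun l _ => map_zsmul _ _ _
      · intro g hg
        obtain ⟨n, hn⟩ := hs g hg
        refine ⟨n, ?_⟩
        have h1 : QuotientAddGroup.mk' (torc (Gbar 𝒜) (Gsub 𝒜)) (g - ∑ l, n l • e l) = 0 :=
          (QuotientAddGroup.eq_zero_iff _).2 hn
        rw [map_sub, sub_eq_zero, map_sum] at h1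
        rw [h1]
        exact Finset.sum_congr rfl fun l _ => map_zsmul _ _ _
  · by_contra hno
    have hall : ∀ x : B, x ∈ verSub 𝒜 (torc (Gbar 𝒜) (Gsub 𝒜)) := by
      intro x
      refine hA x fun D hD _ => ?_
      have hD0 : D = 0 := by
        by_contra h
        exact hno ⟨D, hD, h⟩
      rw [hD0]; rfl
    have hle : Gsub 𝒜 ≤ torc (Gbar 𝒜) (Gsub 𝒜) := by
      refine (AddSubgroup.closure_le _).2 ?_
      intro i hi
      obtain ⟨x, hx⟩ := (𝒜 i).ne_bot_iff_exists_ne_zero.1 hi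
      have h1 := (QH_iff 𝒜 _ _ _).1 ((mem_verSub_iff 𝒜 _ x.1).1 (hall x.1)) i (by
        rw [DirectSum.decompose_of_mem_same 𝒜 x.2]
        exact fun h => hx (Subtype.ext h))
      exact (QuotientAddGroup.eq_zero_iff _).1 h1
    obtain ⟨g, hg, hg'⟩ := hnotors
    obtain ⟨-, n, hn, hn'⟩ := hle hg
    exact hg' n hn hn'
end
end

section
/- Let B be a ring graded by a torsion-free abelian group G. Then: (a) if p is a prime ideal of B and I is the ideal of B generated by all homogeneous elements of p, then I is a prime ideal; (b) if B is an integral domain and p is a height-1 prime ideal of B that contains a nonzero homogeneous element of B, then p is a homogeneous ideal. -/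
noncomputable section

/-- A torsion-free abelian group admits a compatible linear order. -/
theorem exists_linearOrder_of_torsionFree {G : Type*} [AddCommGroup G]
    (htf : ∀ (g : G) (n : ℕ), 0 < n → n • g = 0 → g = 0) :
    ∃ _ : LinearOrder G, IsOrderedCancelAddMonoid G := by
  classical
  haveI : IsAddTorsionFree G := ⟨fun n hn a b hab => by
    have h : n • (a - b) = 0 := by
      rw [nsmul_sub, sub_eq_zero]
      exact hab
    exact sub_eq_zero.mp (htf _ n (Nat.pos_of_ne_zero hn) h)⟩
  let b := Module.Basis.ofVectorSpace ℚ (DivisibleHull G)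
  letI : LinearOrder (Module.Basis.ofVectorSpaceIndex ℚ (DivisibleHull G)) :=
    linearOrderOfSTO WellOrderingRel
  let f : G → Lex (Module.Basis.ofVectorSpaceIndex ℚ (DivisibleHull G) →₀ ℚ) :=
    fun g => toLex (b.repr (DivisibleHull.coeAddMonoidHom G g))
  have hf : Function.Injective f := fun x y h =>
    DivisibleHull.coe_injective (b.repr.injective (toLex.injective h))
  have hadd : ∀ x y, f (x + y) = f x + f y := fun x y => by
    simp only [f, map_add]
    rfl
  letI : LinearOrder G := LinearOrder.lift' f hf
  exact ⟨inferInstance, Function.Injective.isOrderedCancelAddMonoid f hadd Iff.rfl⟩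

theorem span_homogeneous_isPrime
    {G : Type*} [AddCommGroup G] [inst : DecidableEq G]
    {B : Type*} [CommRing B]
    (𝒜 : G → AddSubgroup B) [GradedRing 𝒜]
    (htf : ∀ (g : G) (n : ℕ), 0 < n → n • g = 0 → g = 0) (p : Ideal B) (hp : p.IsPrime) :
    (Ideal.span { x : B | x ∈ p ∧ ∃ i, x ∈ 𝒜 i }).IsPrime := by
  obtain ⟨L, hL⟩ := exists_linearOrder_of_torsionFree htf
  have e : inst = L.toDecidableEq := Subsingleton.elim _ _
  subst e
  have h := Ideal.IsPrime.homogeneousCore (𝒜 := 𝒜) hp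
  have key : (p.homogeneousCore 𝒜).toIdeal = Ideal.span { x : B | x ∈ p ∧ ∃ i, x ∈ 𝒜 i } := by
    change Ideal.span _ = _
    congr 1
    ext x
    constructor
    · rintro ⟨y, hy, rfl⟩
      exact ⟨hy, y.2⟩
    · rintro ⟨hx, hi⟩
      exact ⟨⟨x, hi⟩, hx, rfl⟩
  rwa [key] at h

/-- Let B be a ring graded by a torsion-free abelian group G.  Then:
(a) if p is a prime ideal of B and I is the ideal generated by all homogeneous
    elements of p, then I is prime;
(b) if B is a domain and p is a height-1 prime ideal containing a nonzero homogeneous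
    element of B, then p is a homogeneous ideal (generated by its homogeneous
    elements). -/
theorem homogeneous_part_of_prime
    {G : Type*} [AddCommGroup G] [DecidableEq G]
    {B : Type*} [CommRing B]
    (𝒜 : G → AddSubgroup B) [GradedRing 𝒜]
    (htf : ∀ (g : G) (n : ℕ), 0 < n → n • g = 0 → g = 0) :
    (∀ p : Ideal B, p.IsPrime →
      (Ideal.span { x : B | x ∈ p ∧ ∃ i, x ∈ 𝒜 i }).IsPrime) ∧
    (IsDomain B → ∀ p : Ideal B, heightOne p → (∃ x ∈ p, x ≠ 0 ∧ ∃ i, x ∈ 𝒜 i) →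
      p = Ideal.span { x : B | x ∈ p ∧ ∃ i, x ∈ 𝒜 i }) := by
  refine ⟨fun p hp => span_homogeneous_isPrime 𝒜 htf p hp, ?_⟩
  rintro hB p ⟨hp, -, hmax⟩ ⟨x, hxp, hx0, hxi⟩
  have hle : Ideal.span { x : B | x ∈ p ∧ ∃ i, x ∈ 𝒜 i } ≤ p :=
    Ideal.span_le.mpr fun y hy => hy.1
  by_contra hne
  refine hmax ⊥ _ Ideal.isPrime_bot (span_homogeneous_isPrime 𝒜 htf p hp) ?_
    (lt_of_le_of_ne hle (Ne.symm hne))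
  refine bot_lt_iff_ne_bot.mpr fun hbot => hx0 ?_
  have hx : x ∈ Ideal.span { x : B | x ∈ p ∧ ∃ i, x ∈ 𝒜 i } :=
    Ideal.subset_span ⟨hxp, hxi⟩
  rw [hbot] at hx
  exact hx
end
end

section
/- Let B be an integral domain graded by an abelian group G and let H ∈ 𝕋(B). Then 𝔾(B^{(H)}) = H ∩ 𝔾(B). If moreover B is noetherian and normal, then 𝔾̄(B^{(H)}) = H ∩ 𝔾̄(B). -/
noncomputable section

section Sub

variable {G : Type*} [AddCommGroup G] {B : Type*} [CommRing B]

/-- 𝔾 of a graded subring S of B. -/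
def GsubOf (𝒜 : G → AddSubgroup B) (S : Subring B) : AddSubgroup G :=
  AddSubgroup.closure { i : G | ∃ x : B, x ∈ S ∧ x ≠ 0 ∧ x ∈ 𝒜 i }

/-- 𝕄̄(S,p) for a graded subring S of B and an ideal p of S. -/
def MbarSub (𝒜 : G → AddSubgroup B) (S : Subring B) (p : Ideal S) : AddSubgroup G :=
  AddSubgroup.closure { i : G | ∃ x : S, (x : B) ∈ 𝒜 i ∧ x ∉ p }

open Classical in
/-- 𝔾̄ of a graded subring S of B. -/
noncomputable def GbarSub (𝒜 : G → AddSubgroup B) (S : Subring B) : AddSubgroup G :=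
  if ∃ p : Ideal S, heightOne p then
    ⨅ p : {p : Ideal S // heightOne p}, MbarSub 𝒜 S p.1
  else GsubOf 𝒜 S

end Sub

section Helpers

/-- Group-theoretic core: a subgroup generated by a submonoid `M`, intersected with `H`. -/
lemma aux_closure_inter {G : Type*} [AddCommGroup G] (M : Set G) (h0 : (0 : G) ∈ M)
    (hadd : ∀ a ∈ M, ∀ b ∈ M, a + b ∈ M) (H : AddSubgroup G)
    (hT : ∀ a ∈ M, ∃ n : ℕ, 0 < n ∧ n • a ∈ H) :
    AddSubgroup.closure {i | i ∈ H ∧ i ∈ M} = H ⊓ AddSubgroup.closure M := by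
  apply le_antisymm
  · rw [AddSubgroup.closure_le]
    rintro i ⟨h1, h2⟩
    exact ⟨h1, AddSubgroup.subset_closure h2⟩
  · rintro g ⟨hgH, hg⟩
    have key : ∃ a ∈ M, ∃ b ∈ M, g = a - b := by
      clear hgH
      induction hg using AddSubgroup.closure_induction with
      | mem x hx => exact ⟨x, hx, 0, h0, by simp⟩
      | zero => exact ⟨0, h0, 0, h0, by simp⟩
      | add x y _ _ hx hy =>
        obtain ⟨a, ha, b, hb, rfl⟩ := hx
        obtain ⟨c, hc, d, hd, rfl⟩ := hy
        exact ⟨a + c, hadd _ ha _ hc, b + d, hadd _ hb _ hd, by abel⟩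
      | neg x _ hx =>
        obtain ⟨a, ha, b, hb, rfl⟩ := hx
        exact ⟨b, hb, a, ha, by abel⟩
    obtain ⟨a, ha, b, hb, rfl⟩ := key
    obtain ⟨n, hn, hnb⟩ := hT b hb
    have hsmul : ∀ k : ℕ, k • b ∈ M := by
      intro k
      induction k with
      | zero => simpa using h0
      | succ k ih => rw [succ_nsmul]; exact hadd _ ih _ hb
    obtain ⟨m, rfl⟩ : ∃ m, n = m + 1 := ⟨n - 1, by omega⟩
    have e : a + m • b = (a - b) + (m + 1) • b := by rw [succ_nsmul]; abel
    have e2 : a - b = (a + m • b) - (m + 1) • b := by rw [e]; abel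
    rw [e2]
    refine AddSubgroup.sub_mem _ (AddSubgroup.subset_closure ⟨?_, hadd _ ha _ (hsmul m)⟩)
      (AddSubgroup.subset_closure ⟨hnb, hsmul _⟩)
    rw [e]
    exact H.add_mem hgH hnb

variable {G : Type*} [AddCommGroup G] [DecidableEq G] {B : Type*} [CommRing B]
  (𝒜 : G → AddSubgroup B) [GradedRing 𝒜]

lemma aux_supp_mul (S T U : Set G) (hST : ∀ i ∈ S, ∀ j ∈ T, i + j ∈ U) (a b : B)
    (ha : ∀ i, i ∉ S → (DirectSum.decompose 𝒜 a i : B) = 0)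
    (hb : ∀ i, i ∉ T → (DirectSum.decompose 𝒜 b i : B) = 0) (n : G) (hn : n ∉ U) :
    (DirectSum.decompose 𝒜 (a * b) n : B) = 0 := by
  classical
  rw [DirectSum.decompose_mul, DirectSum.coe_mul_apply]
  apply Finset.sum_eq_zero
  rintro ⟨i, j⟩ hij
  simp only [Finset.mem_filter] at hij
  by_cases hi : i ∈ S
  · by_cases hj : j ∈ T
    · exact absurd (hij.2 ▸ hST i hi j hj) hn
    · simp [hb j hj]
  · simp [ha i hi]

lemma aux_homog_mem {H : AddSubgroup G} {i : G} (hi : i ∈ H) {x : B} (hx : x ∈ 𝒜 i) :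
    x ∈ verSub 𝒜 H :=
  Subring.subset_closure (Set.mem_biUnion hi hx)

lemma aux_mem_verSub (H : AddSubgroup G) (x : B) :
    x ∈ verSub 𝒜 H ↔ ∀ i, i ∉ (H : Set G) → (DirectSum.decompose 𝒜 x i : B) = 0 := by
  constructor
  · intro hx
    induction hx using Subring.closure_induction with
    | mem x hx =>
      simp only [Set.mem_iUnion] at hx
      obtain ⟨j, hj, hx⟩ := hx
      intro i hi
      exact DirectSum.decompose_of_mem_ne 𝒜 hx (by rintro rfl; exact hi hj)
    | zero => simp
    | one =>
      intro i hi
      exact DirectSum.decompose_of_mem_ne 𝒜 SetLike.GradedOne.one_mem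
        (by rintro rfl; exact hi H.zero_mem)
    | add x y _ _ hx hy =>
      intro i hi
      simp [DirectSum.decompose_add, hx i hi, hy i hi]
    | neg x _ hx =>
      intro i hi
      have h := hx i hi
      rw [← GradedRing.proj_apply] at h ⊢
      rw [map_neg, h, neg_zero]
    | mul x y _ _ hx hy =>
      exact aux_supp_mul 𝒜 H H H (fun i hi j hj => H.add_mem hi hj) x y hx hy
  · intro hx
    classical
    rw [← DirectSum.sum_support_decompose 𝒜 x]
    refine Subring.sum_mem _ fun i _ => ?_
    by_cases hi : i ∈ H
    · exact aux_homog_mem 𝒜 hi (SetLike.coe_mem _)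
    · rw [hx i hi]; exact Subring.zero_mem _

lemma aux_degree_mem {H : AddSubgroup G} {i : G} {x : B} (hx : x ∈ verSub 𝒜 H) (h0 : x ≠ 0)
    (hi : x ∈ 𝒜 i) : i ∈ H := by
  by_contra h
  have := (aux_mem_verSub 𝒜 H x).1 hx i h
  rw [DirectSum.decompose_of_mem_same 𝒜 hi] at this
  exact h0 this

lemma aux_split (H : AddSubgroup G) (b : B) : ∃ b₁ b₂ : B, b = b₁ + b₂ ∧ b₁ ∈ verSub 𝒜 H ∧
    ∀ i, i ∉ (H : Set G)ᶜ → (DirectSum.decompose 𝒜 b₂ i : B) = 0 := by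
  induction b using DirectSum.Decomposition.inductionOn 𝒜 with
  | zero => exact ⟨0, 0, by simp, Subring.zero_mem _, by simp⟩
  | @homogeneous i m =>
    by_cases hi : i ∈ H
    · exact ⟨m, 0, by simp, aux_homog_mem 𝒜 hi m.2, by simp⟩
    · refine ⟨0, m, by simp, Subring.zero_mem _, fun j hj => ?_⟩
      exact DirectSum.decompose_of_mem_ne 𝒜 m.2 (by rintro rfl; exact hj hi)
  | add m m' h h' =>
    obtain ⟨a, b, e, h1, h2⟩ := h
    obtain ⟨a', b', e', h1', h2'⟩ := h'
    refine ⟨a + a', b + b', by rw [e, e']; ring, Subring.add_mem _ h1 h1', fun i hi => ?_⟩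
    simp [DirectSum.decompose_add, h2 i hi, h2' i hi]

lemma aux_div_mem [IsDomain B] (H : AddSubgroup G) {s b : B} (hs : s ∈ verSub 𝒜 H) (hs0 : s ≠ 0)
    (hsb : s * b ∈ verSub 𝒜 H) : b ∈ verSub 𝒜 H := by
  obtain ⟨b₁, b₂, rfl, h1, h2⟩ := aux_split 𝒜 H b
  have h3 : s * b₂ ∈ verSub 𝒜 H := by
    have := Subring.sub_mem _ hsb (Subring.mul_mem _ hs h1)
    rwa [mul_add, add_sub_cancel_left] at this
  have h4 := aux_supp_mul 𝒜 H (H : Set G)ᶜ (H : Set G)ᶜ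
    (fun i hi j hj hij => hj ((H.add_mem_cancel_left hi).1 hij)) s b₂
    ((aux_mem_verSub 𝒜 H s).1 hs) h2
  have h5 : s * b₂ = 0 := by
    classical
    rw [← DirectSum.sum_support_decompose 𝒜 (s * b₂)]
    refine Finset.sum_eq_zero fun i _ => ?_
    by_cases hi : i ∈ H
    · exact h4 i (fun h => h hi)
    · exact (aux_mem_verSub 𝒜 H _).1 h3 i hi
  have h6 : b₂ = 0 := (mul_eq_zero.1 h5).resolve_left hs0
  rw [h6, add_zero]; exact h1

lemma aux_integral (H : AddSubgroup G) (hH : Tmem 𝒜 H) :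
    Algebra.IsIntegral (verSub 𝒜 H) B := by
  constructor
  intro b
  induction b using DirectSum.Decomposition.inductionOn 𝒜 with
  | zero => exact isIntegral_zero
  | @homogeneous i m =>
    by_cases hm : (m : B) = 0
    · rw [hm]; exact isIntegral_zero
    have hi : i ∈ Gsub 𝒜 := AddSubgroup.subset_closure (by
      intro h
      have h2 : ∀ y : B, y ∈ 𝒜 i → y = 0 := by
        rw [h]; exact fun y hy => hy
      exact hm (h2 m m.2))
    obtain ⟨n, hn, hni⟩ := hH i hi
    refine IsIntegral.of_pow hn ?_
    have : (m : B) ^ n ∈ verSub 𝒜 H := aux_homog_mem 𝒜 hni (SetLike.pow_mem_graded n m.2)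
    exact isIntegral_algebraMap (R := verSub 𝒜 H) (x := ⟨_, this⟩)
  | add m m' h h' => exact h.add h'

lemma aux_normal [IsDomain B] [IsIntegrallyClosed B] (H : AddSubgroup G) :
    IsIntegrallyClosed (verSub 𝒜 H) := by
  set A := verSub 𝒜 H with hA
  rw [isIntegrallyClosed_iff (FractionRing A)]
  intro x hx
  have hinj : Function.Injective (algebraMap A (FractionRing B)) := by
    rw [IsScalarTower.algebraMap_eq A B (FractionRing B)]
    exact (IsFractionRing.injective B (FractionRing B)).comp Subtype.val_injective
  let φ : FractionRing A →ₐ[A] FractionRing B :=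
    IsFractionRing.liftAlgHom (g := Algebra.ofId A (FractionRing B)) hinj
  have h1 : IsIntegral B (φ x) := (hx.map φ).tower_top
  obtain ⟨y, hy⟩ := IsIntegrallyClosed.isIntegral_iff.1 h1
  obtain ⟨a, s, hs, hx'⟩ := IsFractionRing.div_surjective (A := A) x
  have hs0 : s ≠ 0 := nonZeroDivisors.ne_zero hs
  have hs1 : algebraMap A (FractionRing A) s ≠ 0 := by
    simpa using hs0
  have e : algebraMap A (FractionRing A) s * x = algebraMap A (FractionRing A) a := by
    rw [← hx']; field_simp
  have e2 : (s : B) * y = a := by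
    apply IsFractionRing.injective B (FractionRing B)
    have := congrArg φ e
    rw [map_mul, ← hy, φ.commutes, φ.commutes] at this
    rw [map_mul]
    exact this
  have hyA : y ∈ A := aux_div_mem 𝒜 H s.2 (by simpa using hs0) (by rw [e2]; exact a.2)
  refine ⟨⟨y, hyA⟩, ?_⟩
  apply mul_left_cancel₀ hs1
  rw [e, ← map_mul]
  congr 1
  exact Subtype.ext e2

lemma aux_heightOne_iff {R : Type*} [CommRing R] [IsDomain R] (p : Ideal R) :
    heightOne p ↔ p.IsPrime ∧ p ≠ ⊥ ∧ ∀ r : Ideal R, r.IsPrime → r < p → r = ⊥ := by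
  constructor
  · rintro ⟨h1, ⟨q, hq, hqp⟩, h3⟩
    refine ⟨h1, (bot_le.trans_lt hqp).ne', fun r hr hrp => ?_⟩
    by_contra h
    exact h3 ⊥ r Ideal.isPrime_bot hr (bot_lt_iff_ne_bot.2 h) hrp
  · rintro ⟨h1, h2, h3⟩
    refine ⟨h1, ⟨⊥, Ideal.isPrime_bot, bot_lt_iff_ne_bot.2 h2⟩, fun q r _ hr hqr hrp => ?_⟩
    rw [h3 r hr hrp] at hqr
    exact not_lt_bot hqr

lemma aux_heightOne_comap {R S : Type*} [CommRing R] [CommRing S] [IsDomain R] [IsDomain S]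
    [Algebra R S] [FaithfulSMul R S] [Algebra.IsIntegral R S] [IsIntegrallyClosed R]
    (P : Ideal S) (hP : heightOne P) : heightOne (P.comap (algebraMap R S)) := by
  rw [aux_heightOne_iff] at hP ⊢
  obtain ⟨h1, h2, h3⟩ := hP
  refine ⟨inferInstance, fun h => h2 (Ideal.eq_bot_of_comap_eq_bot h), fun r hr hrp => ?_⟩
  obtain ⟨Q, hQ, hQp, hQr⟩ :=
    Ideal.exists_ideal_lt_liesOver_of_lt (q := P.under R) P hrp
  have := h3 Q hQp hQ
  subst this
  rw [hQr.over]
  exact Ideal.under_bot _ _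

lemma aux_heightOne_exists {R S : Type*} [CommRing R] [CommRing S] [IsDomain R] [IsDomain S]
    [Algebra R S] [FaithfulSMul R S] [Algebra.IsIntegral R S]
    (p : Ideal R) (hp : heightOne p) :
    ∃ P : Ideal S, heightOne P ∧ P.comap (algebraMap R S) = p := by
  rw [aux_heightOne_iff] at hp
  obtain ⟨h1, h2, h3⟩ := hp
  have hbot : (⊥ : Ideal S).comap (algebraMap R S) = ⊥ := Ideal.under_bot _ _
  obtain ⟨P, -, hP, hPp⟩ := Ideal.exists_ideal_over_prime_of_isIntegral p (⊥ : Ideal S)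
    (by rw [hbot]; exact bot_le)
  refine ⟨P, (aux_heightOne_iff P).2 ⟨hP, ?_, fun r hr hrP => ?_⟩, hPp⟩
  · rintro rfl
    exact h2 (hPp.symm.trans hbot)
  · apply Ideal.eq_bot_of_comap_eq_bot (R := R)
    refine h3 _ inferInstance ?_
    rw [← hPp]
    exact Ideal.IsIntegral.comap_lt_comap hrP

lemma aux_Gsub [IsDomain B] (H : AddSubgroup G) (hH : Tmem 𝒜 H) :
    GsubOf 𝒜 (verSub 𝒜 H) = H ⊓ Gsub 𝒜 := by
  have hne : ∀ i, 𝒜 i ≠ ⊥ ↔ ∃ x : B, x ∈ 𝒜 i ∧ x ≠ 0 := fun i =>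
    AddSubgroup.ne_bot_iff_exists_ne_zero.trans
      ⟨fun ⟨x, hx⟩ => ⟨x, x.2, by simpa using hx⟩,
        fun ⟨x, hx, h⟩ => ⟨⟨x, hx⟩, by simpa [Subtype.ext_iff] using h⟩⟩
  unfold Gsub
  rw [← aux_closure_inter]
  · unfold GsubOf
    congr 1
    ext i
    simp only [Set.mem_setOf_eq, hne]
    constructor
    · rintro ⟨x, hx, h0, hi⟩
      exact ⟨aux_degree_mem 𝒜 hx h0 hi, x, hi, h0⟩
    · rintro ⟨h, x, hi, h0⟩
      exact ⟨x, aux_homog_mem 𝒜 h hi, h0, hi⟩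
  · exact (hne 0).2 ⟨1, SetLike.GradedOne.one_mem, one_ne_zero⟩
  · intro a ha b hb
    obtain ⟨x, hx, hx0⟩ := (hne a).1 ha
    obtain ⟨y, hy, hy0⟩ := (hne b).1 hb
    exact (hne _).2 ⟨x * y, SetLike.mul_mem_graded hx hy, mul_ne_zero hx0 hy0⟩
  · exact fun a ha => hH a (AddSubgroup.subset_closure ha)

lemma aux_Mbar [IsDomain B] (H : AddSubgroup G) (hH : Tmem 𝒜 H) (P : Ideal B) (hP : P.IsPrime) :
    MbarSub 𝒜 (verSub 𝒜 H) (P.comap (algebraMap (verSub 𝒜 H) B)) = H ⊓ Mbar 𝒜 P := by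
  have hne : ∀ i, ¬ (𝒜 i : Set B) ⊆ (P : Set B) ↔ ∃ x : B, x ∈ 𝒜 i ∧ x ∉ P := fun i => by
    rw [Set.not_subset]; rfl
  unfold Mbar
  rw [← aux_closure_inter]
  · unfold MbarSub
    congr 1
    ext i
    simp only [Set.mem_setOf_eq, hne]
    constructor
    · rintro ⟨x, hi, h0⟩
      refine ⟨aux_degree_mem 𝒜 x.2 ?_ hi, x, hi, h0⟩
      intro h
      apply h0
      rw [Ideal.mem_comap]
      have h' : algebraMap (verSub 𝒜 H) B x = 0 := h
      rw [h']
      exact Ideal.zero_mem _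
    · rintro ⟨h, x, hi, h0⟩
      exact ⟨⟨x, aux_homog_mem 𝒜 h hi⟩, hi, h0⟩
  · exact (hne 0).2 ⟨1, SetLike.GradedOne.one_mem, fun h => hP.ne_top ((Ideal.eq_top_iff_one _).2 h)⟩
  · intro a ha b hb
    obtain ⟨x, hx, hx0⟩ := (hne a).1 ha
    obtain ⟨y, hy, hy0⟩ := (hne b).1 hb
    exact (hne _).2 ⟨x * y, SetLike.mul_mem_graded hx hy,
      fun h => (hP.mem_or_mem h).elim hx0 hy0⟩
  · intro a ha
    refine hH a (AddSubgroup.subset_closure fun h => ?_)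
    obtain ⟨x, hx, hx0⟩ := (hne a).1 ha
    rw [h] at hx
    apply hx0
    rw [AddSubgroup.mem_bot.1 hx]
    exact P.zero_mem

end Helpers

/-- Let B be a domain graded by an abelian group G and H ∈ 𝕋(B).  Then
𝔾(B^{(H)}) = H ∩ 𝔾(B), and, if moreover B is noetherian and normal,
𝔾̄(B^{(H)}) = H ∩ 𝔾̄(B). -/
theorem Gsub_Gbar_of_veronese
    {G : Type*} [AddCommGroup G] [DecidableEq G]
    {B : Type*} [CommRing B] [IsDomain B]
    (𝒜 : G → AddSubgroup B) [GradedRing 𝒜]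
    (H : AddSubgroup G) (hH : Tmem 𝒜 H) :
    GsubOf 𝒜 (verSub 𝒜 H) = H ⊓ Gsub 𝒜 ∧
    (IsNoetherianRing B → IsIntegrallyClosed B →
      GbarSub 𝒜 (verSub 𝒜 H) = H ⊓ Gbar 𝒜) := by
  refine ⟨aux_Gsub 𝒜 H hH, fun _ _ => ?_⟩
  have := aux_integral 𝒜 H hH
  have := aux_normal 𝒜 H
  have : FaithfulSMul (verSub 𝒜 H) B :=
    (faithfulSMul_iff_algebraMap_injective _ _).2 Subtype.val_injective
  unfold GbarSub Gbar
  by_cases hB : ∃ p : Ideal B, heightOne p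
  · have hA : ∃ p : Ideal (verSub 𝒜 H), heightOne p :=
      ⟨_, aux_heightOne_comap hB.choose hB.choose_spec⟩
    rw [if_pos hA, if_pos hB]
    obtain ⟨P₀, hP₀⟩ := hB
    apply le_antisymm
    · have hle : ∀ P : Ideal B, ∀ hP : heightOne P,
          (⨅ p : {p : Ideal (verSub 𝒜 H) // heightOne p}, MbarSub 𝒜 (verSub 𝒜 H) p.1) ≤
            H ⊓ Mbar 𝒜 P := fun P hP => by
        rw [← aux_Mbar 𝒜 H hH P hP.1]
        exact iInf_le (fun p : {p : Ideal (verSub 𝒜 H) // heightOne p} =>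
          MbarSub 𝒜 (verSub 𝒜 H) p.1) ⟨_, aux_heightOne_comap P hP⟩
      exact le_inf ((hle P₀ hP₀).trans inf_le_left)
        (le_iInf fun P => (hle P.1 P.2).trans inf_le_right)
    · refine le_iInf ?_
      rintro ⟨p, hp⟩
      obtain ⟨P, hP, rfl⟩ := aux_heightOne_exists (S := B) p hp
      rw [aux_Mbar 𝒜 H hH P hP.1]
      exact inf_le_inf_left _ (iInf_le (fun p : {p : Ideal B // heightOne p} => Mbar 𝒜 p.1) ⟨P, hP⟩)
  · have hA : ¬ ∃ p : Ideal (verSub 𝒜 H), heightOne p := by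
      rintro ⟨p, hp⟩
      obtain ⟨P, hP, -⟩ := aux_heightOne_exists (S := B) p hp
      exact hB ⟨P, hP⟩
    rw [if_neg hA, if_neg hB]
    exact aux_Gsub 𝒜 H hH
end
end

section
/- Let k be a field of characteristic 0 and B = ⊕_{i∈ℤ} B_i a ℤ-graded normal affine k-domain. If e(B) ≠ 0 and ē(B) = 0, then there exists a nonzero homogeneous locally nilpotent derivation D of B with ker(D) = B_0; in particular, B is non-rigid. -/
noncomputable section

/-- The nonnegative generator of a subgroup of ℤ (so that the gcd of a set of integers
is `groupGen` of the subgroup it generates, and the lcm of a set of integers is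
`groupGen` of the intersection of the subgroups the elements generate). -/
noncomputable def groupGen (H : AddSubgroup ℤ) : ℕ :=
  (Submodule.IsPrincipal.generator (AddSubgroup.toIntSubmodule H : Ideal ℤ)).natAbs

section ZGraded

variable {B : Type*} [CommRing B]

/-- The set of height-1 homogeneous prime ideals of a ℤ-graded ring. -/
def homogHt1 (𝒜 : ℤ → AddSubgroup B) : Set (Ideal B) :=
  { p | heightOne p ∧ p = Ideal.span { x : B | x ∈ p ∧ ∃ i : ℤ, x ∈ 𝒜 i } }

/-- The saturation index e(B) = gcd{ n : B_n ≠ 0 } of a ℤ-graded ring. -/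
noncomputable def eB (𝒜 : ℤ → AddSubgroup B) : ℕ :=
  groupGen (Gsub 𝒜)

open Classical in
/-- The codimension-1 saturation index ē(B) = lcm{ e(B/p) : p ∈ Z } (Z the set of
height-1 homogeneous primes) if Z ≠ ∅, and ē(B) = e(B) if Z = ∅.  Here e(B/p) is the
gcd of { n : (B/p)_n ≠ 0 } = { n : B_n ⊄ p }, so that e(B/p)ℤ = 𝕄̄(B,p) and the lcm
corresponds to the intersection of the subgroups 𝕄̄(B,p). -/
noncomputable def ebarB (𝒜 : ℤ → AddSubgroup B) : ℕ :=
  if (homogHt1 𝒜).Nonempty then groupGen (⨅ p : homogHt1 𝒜, Mbar 𝒜 p.1) else eB 𝒜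

end ZGraded

open DirectSum in
theorem aux_mul_comp {B : Type*} [CommRing B] (𝒜 : ℤ → AddSubgroup B) [GradedRing 𝒜]
    {x : B} {i : ℤ} (hx : x ∈ 𝒜 i) (y : B) (n : ℤ) :
    (decompose 𝒜 (x * y) n : B) = x * (decompose 𝒜 y (n - i) : B) := by
  induction y using DirectSum.Decomposition.inductionOn 𝒜 with
  | zero => simp
  | @homogeneous j m =>
    have hm := m.2
    have hxm : x * (m : B) ∈ 𝒜 (i + j) := SetLike.mul_mem_graded hx hm
    by_cases h : i + j = n
    · subst h
      rw [decompose_of_mem_same _ hxm, add_sub_cancel_left, decompose_of_mem_same _ hm]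
    · rw [decompose_of_mem_ne _ hxm h, decompose_of_mem_ne _ hm (by omega), mul_zero]
  | add a b ha hb =>
    rw [mul_add, decompose_add, decompose_add, DirectSum.add_apply, DirectSum.add_apply]
    push_cast
    rw [ha, hb, mul_add]

open DirectSum in
theorem aux_unit {B : Type*} [CommRing B] [IsDomain B] (𝒜 : ℤ → AddSubgroup B) [GradedRing 𝒜]
    {x y : B} (hxy : x * y = 1) : ∃ i, x ∈ 𝒜 i := by
  classical
  have hx : x ≠ 0 := left_ne_zero_of_mul_eq_one hxy
  have hy : y ≠ 0 := right_ne_zero_of_mul_eq_one hxy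
  have hne : ∀ z : B, z ≠ 0 → (decompose 𝒜 z).support.Nonempty := by
    intro z hz
    by_contra h
    rw [Finset.not_nonempty_iff_eq_empty, DFinsupp.support_eq_empty] at h
    exact hz (by simpa using congrArg (decompose 𝒜).symm h)
  set X := (decompose 𝒜 x).support with hX
  set Y := (decompose 𝒜 y).support with hY
  have hXn := hne x hx
  have hYn := hne y hy
  have key : ∀ a ∈ X, ∀ b ∈ Y, (∀ a' ∈ X, ∀ b' ∈ Y, a' + b' = a + b → a' = a ∧ b' = b) →
      a + b = 0 := by
    intro a ha b hb h
    by_contra hab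
    have h1 : (decompose 𝒜 (x * y) (a + b) : B) = 0 := by
      rw [hxy]
      exact decompose_of_mem_ne _ (SetLike.one_mem_graded 𝒜) (Ne.symm hab)
    rw [decompose_mul, coe_mul_apply, Finset.sum_eq_single (a, b)] at h1
    · rcases mul_eq_zero.mp h1 with h2 | h2
      · exact (DFinsupp.mem_support_iff.mp ha) (Subtype.ext h2)
      · exact (DFinsupp.mem_support_iff.mp hb) (Subtype.ext h2)
    · rintro ⟨a', b'⟩ h3 h4
      simp only [Finset.mem_filter, Finset.mem_product] at h3
      obtain ⟨e1, e2⟩ := h a' h3.1.1 b' h3.1.2 h3.2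
      exact absurd (by rw [e1, e2]) h4
    · intro h3
      exact absurd (by exact Finset.mem_filter.mpr ⟨Finset.mem_product.mpr ⟨ha, hb⟩, rfl⟩) h3
  have k1 := key (X.max' hXn) (X.max'_mem hXn) (Y.max' hYn) (Y.max'_mem hYn) (by
    intro a' ha' b' hb' h
    have := X.le_max' a' ha'
    have := Y.le_max' b' hb'
    omega)
  have k2 := key (X.min' hXn) (X.min'_mem hXn) (Y.min' hYn) (Y.min'_mem hYn) (by
    intro a' ha' b' hb' h
    have := X.min'_le a' ha'
    have := Y.min'_le b' hb'
    omega)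
  have k3 := X.min'_le _ (X.max'_mem hXn)
  have k4 := Y.min'_le _ (Y.max'_mem hYn)
  refine ⟨X.max' hXn, ?_⟩
  rw [← sum_support_decompose 𝒜 x]
  refine sum_mem fun j hj => ?_
  have := X.le_max' j hj
  have := X.min'_le j hj
  have hjj : j = X.max' hXn := by omega
  rw [← hjj]
  exact (decompose 𝒜 x j).2

open DirectSum in
theorem aux_k {k : Type*} [Field k] {B : Type*} [CommRing B] [IsDomain B] [Algebra k B]
    (𝒜 : ℤ → AddSubgroup B) [GradedRing 𝒜] (a : k) : algebraMap k B a ∈ 𝒜 0 := by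
  have hu : ∀ c : k, c ≠ 0 → ∃ i, algebraMap k B c ∈ 𝒜 i := fun c hc =>
    aux_unit 𝒜 (y := algebraMap k B c⁻¹) (by rw [← map_mul, mul_inv_cancel₀ hc, map_one])
  by_cases ha : a = 0
  · subst ha; simp
  by_cases ha1 : a + 1 = 0
  · rw [eq_neg_of_add_eq_zero_left ha1, map_neg, map_one]
    exact neg_mem (SetLike.one_mem_graded 𝒜)
  obtain ⟨i, hi⟩ := hu a ha
  obtain ⟨j, hj⟩ := hu _ ha1
  by_cases hi0 : i = 0
  · rwa [← hi0]
  exfalso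
  have e : algebraMap k B (a + 1) = algebraMap k B a + 1 := by simp
  have hone : (1 : B) ∈ 𝒜 0 := SetLike.one_mem_graded 𝒜
  have e1 : ∀ n, (decompose 𝒜 (algebraMap k B (a + 1)) n : B) =
      decompose 𝒜 (algebraMap k B a) n + decompose 𝒜 (1 : B) n := by
    intro n; rw [e, decompose_add]; rfl
  by_cases hj0 : j = 0
  · have := e1 i
    rw [decompose_of_mem_ne _ hj (by omega), decompose_of_mem_same _ hi,
      decompose_of_mem_ne _ hone (by omega), add_zero] at this
    exact ha ((map_eq_zero_iff _ (algebraMap k B).injective).mp this.symm)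
  · have := e1 0
    rw [decompose_of_mem_ne _ hj (by omega), decompose_of_mem_ne _ hi (by omega),
      decompose_of_mem_same _ hone, zero_add] at this
    exact one_ne_zero this.symm

open DirectSum in
theorem aux_gens (k : Type*) [Field k] {B : Type*} [CommRing B] [Algebra k B]
    [Algebra.FiniteType k B] (𝒜 : ℤ → AddSubgroup B) [GradedRing 𝒜] :
    ∃ s : Finset B, (∀ x ∈ s, ∃ i, x ∈ 𝒜 i) ∧ Algebra.adjoin k (s : Set B) = ⊤ := by
  classical
  obtain ⟨s, hs⟩ := (Algebra.FiniteType.out : (⊤ : Subalgebra k B).FG)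
  refine ⟨s.biUnion fun x => (decompose 𝒜 x).support.image fun i => (decompose 𝒜 x i : B), ?_, ?_⟩
  · intro x hx
    simp only [Finset.mem_biUnion, Finset.mem_image] at hx
    obtain ⟨y, _, i, _, rfl⟩ := hx
    exact ⟨i, (decompose 𝒜 y i).2⟩
  · rw [eq_top_iff, ← hs, Algebra.adjoin_le_iff]
    intro x hx
    rw [← sum_support_decompose 𝒜 x]
    refine sum_mem fun i hi => Algebra.subset_adjoin ?_
    simp only [Finset.mem_coe, Finset.mem_biUnion, Finset.mem_image]
    exact ⟨x, hx, i, hi, rfl⟩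

open DirectSum in
theorem aux_Mbar_s15 {k : Type*} [Field k] {B : Type*} [CommRing B] [IsDomain B] [Algebra k B]
    (𝒜 : ℤ → AddSubgroup B) [GradedRing 𝒜] (s : Finset B) (hs : ∀ x ∈ s, ∃ i, x ∈ 𝒜 i)
    (hs' : Algebra.adjoin k (s : Set B) = ⊤) (p : Ideal B) :
    Mbar 𝒜 p = AddSubgroup.closure {j : ℤ | ∃ x ∈ {x | x ∈ s ∧ x ∉ p}, x ∈ 𝒜 j} := by
  classical
  apply le_antisymm
  · set H := AddSubgroup.closure {j : ℤ | ∃ x ∈ {x | x ∈ s ∧ x ∉ p}, x ∈ 𝒜 j} with hH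
    have main : ∀ x : B, ∀ i, i ∉ H → (decompose 𝒜 x i : B) ∈ p := by
      intro x
      have hx : x ∈ Algebra.adjoin k (s : Set B) := by rw [hs']; trivial
      induction hx using Algebra.adjoin_induction with
      | mem x hx =>
        intro i hi
        obtain ⟨j, hj⟩ := hs x hx
        by_cases hji : j = i
        · subst hji
          rw [decompose_of_mem_same _ hj]
          by_contra hxp
          exact hi (AddSubgroup.subset_closure ⟨x, ⟨hx, hxp⟩, hj⟩)
        · rw [decompose_of_mem_ne _ hj hji]; exact zero_mem _
      | algebraMap r =>
        intro i hi
        rw [decompose_of_mem_ne _ (aux_k 𝒜 r) (by rintro rfl; exact hi (zero_mem _))]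
        exact zero_mem _
      | add x y _ _ hx hy =>
        intro i hi
        rw [decompose_add]
        exact add_mem (hx i hi) (hy i hi)
      | mul x y _ _ hx hy =>
        intro i hi
        rw [decompose_mul, coe_mul_apply]
        refine sum_mem ?_
        rintro ⟨a, b⟩ hab
        simp only [Finset.mem_filter] at hab
        by_cases ha : a ∈ H
        · refine Ideal.mul_mem_left _ _ (hy b fun hb => hi ?_)
          rw [← hab.2]; exact add_mem ha hb
        · exact Ideal.mul_mem_right _ _ (hx a ha)
    rw [Mbar, AddSubgroup.closure_le]
    intro i hi
    by_contra hiH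
    refine hi fun x hx => ?_
    have := main x i hiH
    rwa [decompose_of_mem_same _ hx] at this
  · rw [AddSubgroup.closure_le]
    rintro j ⟨x, ⟨_, hxp⟩, hxj⟩
    exact AddSubgroup.subset_closure fun h => hxp (h hxj)

theorem aux_fin (F : Set (AddSubgroup ℤ)) (hF : F.Finite) (h : ∀ H ∈ F, H ≠ ⊥) :
    ∃ n : ℤ, n ≠ 0 ∧ ∀ H ∈ F, n ∈ H := by
  induction F, hF using Set.Finite.induction_on with
  | empty => exact ⟨1, one_ne_zero, by simp⟩
  | @insert a S _ _ ih =>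
    obtain ⟨n, hn, hnS⟩ := ih fun H hH => h H (Set.mem_insert_of_mem _ hH)
    obtain ⟨⟨m, hm⟩, hm1⟩ := AddSubgroup.ne_bot_iff_exists_ne_zero.mp (h a (Set.mem_insert _ _))
    have hm0 : m ≠ 0 := fun h => hm1 (Subtype.ext h)
    refine ⟨n * m, mul_ne_zero hn hm0, ?_⟩
    intro H hH
    rcases hH with rfl | hH
    · rw [← smul_eq_mul]; exact zsmul_mem hm n
    · rw [mul_comm, ← smul_eq_mul]; exact zsmul_mem (hnS H hH) _

theorem aux_groupGen (H : AddSubgroup ℤ) : groupGen H = 0 ↔ H = ⊥ := by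
  rw [groupGen, Int.natAbs_eq_zero, ← Submodule.IsPrincipal.eq_bot_iff_generator_eq_zero]
  exact (map_eq_bot_iff AddSubgroup.toIntSubmodule)

/-- Reduction: some height one homogeneous prime contains all the `B_i`, `i ≠ 0`. -/
theorem aux_prime (k : Type*) [Field k] {B : Type*} [CommRing B] [IsDomain B] [Algebra k B]
    [Algebra.FiniteType k B] (𝒜 : ℤ → AddSubgroup B) [GradedRing 𝒜]
    (he : eB 𝒜 ≠ 0) (hebar : ebarB 𝒜 = 0) :
    ∃ p ∈ homogHt1 𝒜, ∀ i, i ≠ 0 → ∀ x ∈ 𝒜 i, x ∈ p := by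
  unfold ebarB at hebar
  split_ifs at hebar with hZ
  swap
  · exact absurd hebar he
  rw [aux_groupGen] at hebar
  obtain ⟨s, hs, hs'⟩ := aux_gens k 𝒜
  have hfin : (Set.range fun p : homogHt1 𝒜 => Mbar 𝒜 p.1).Finite := by
    refine Set.Finite.subset (s := (fun T : Set B =>
      AddSubgroup.closure {j : ℤ | ∃ x ∈ T, x ∈ 𝒜 j}) '' (𝒫 (s : Set B)))
      (Set.Finite.image _ s.finite_toSet.finite_subsets) ?_
    rintro _ ⟨p, rfl⟩
    exact ⟨{x | x ∈ s ∧ x ∉ p.1}, fun x hx => hx.1, (aux_Mbar_s15 𝒜 s hs hs' p.1).symm⟩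
  by_cases h : ∃ p : homogHt1 𝒜, Mbar 𝒜 p.1 = ⊥
  · obtain ⟨p, hp⟩ := h
    refine ⟨p.1, p.2, fun i hi x hx => ?_⟩
    by_contra hxp
    have : i ∈ Mbar 𝒜 p.1 := AddSubgroup.subset_closure fun h => hxp (h hx)
    rw [hp] at this
    exact hi this
  · exfalso
    push Not at h
    obtain ⟨n, hn, hn'⟩ := aux_fin _ hfin (by rintro _ ⟨p, rfl⟩; exact h p)
    have : n ∈ (⨅ p : homogHt1 𝒜, Mbar 𝒜 p.1) := by
      rw [AddSubgroup.mem_iInf]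
      exact fun p => hn' _ ⟨p, rfl⟩
    rw [hebar] at this
    exact hn this

theorem aux_dvr {B : Type*} [CommRing B] [IsDomain B] [IsIntegrallyClosed B] [IsNoetherianRing B]
    (p : Ideal B) [hp : p.IsPrime] (h : heightOne p) :
    IsDiscreteValuationRing (Localization.AtPrime p) := by
  obtain ⟨_, ⟨q, hq, hqp⟩, h3⟩ := h
  have hpb : p ≠ ⊥ := (lt_of_le_of_lt bot_le hqp).ne'
  have hle : p.primeCompl ≤ nonZeroDivisors B := p.primeCompl_le_nonZeroDivisors
  haveI : IsDomain (Localization.AtPrime p) := IsLocalization.isDomain_localization hle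
  haveI : IsNoetherianRing (Localization.AtPrime p) :=
    IsLocalization.isNoetherianRing p.primeCompl _ inferInstance
  haveI : IsIntegrallyClosed (Localization.AtPrime p) :=
    isIntegrallyClosed_of_isLocalization _ p.primeCompl hle
  have hinj : Function.Injective (algebraMap B (Localization.AtPrime p)) :=
    IsLocalization.injective _ hle
  have hnf : ¬ IsField (Localization.AtPrime p) := by
    rw [IsLocalRing.isField_iff_maximalIdeal_eq, ← Localization.AtPrime.map_eq_maximalIdeal]
    intro hb
    rw [Ideal.map_eq_bot_iff_of_injective hinj] at hb
    exact hpb hb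
  have htfae : (IsIntegrallyClosed (Localization.AtPrime p) ∧
      ∃! P : Ideal (Localization.AtPrime p), P ≠ ⊥ ∧ P.IsPrime) ↔
      IsDiscreteValuationRing (Localization.AtPrime p) :=
    (IsDiscreteValuationRing.TFAE _ hnf).out 3 0
  refine htfae.mp ⟨inferInstance, ?_⟩
  refine ⟨IsLocalRing.maximalIdeal _, ⟨?_, inferInstance⟩, ?_⟩
  · exact (IsLocalRing.isField_iff_maximalIdeal_eq.not.mp hnf)
  · rintro P ⟨hP0, hP⟩
    have hc : (P.comap (algebraMap B (Localization.AtPrime p))).IsPrime := Ideal.comap_isPrime _ _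
    have hmap : (P.comap (algebraMap B (Localization.AtPrime p))).map
        (algebraMap B (Localization.AtPrime p)) = P := IsLocalization.map_comap p.primeCompl _ P
    have hcp : P.comap (algebraMap B (Localization.AtPrime p)) ≤ p := by
      intro x hx
      by_contra hxp
      have hu : IsUnit (algebraMap B (Localization.AtPrime p) x) :=
        IsLocalization.map_units (Localization.AtPrime p) (⟨x, hxp⟩ : p.primeCompl)
      exact hP.ne_top (Ideal.eq_top_of_isUnit_mem _ hx hu)
    have hc0 : P.comap (algebraMap B (Localization.AtPrime p)) ≠ ⊥ := by
      intro h0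
      rw [h0, Ideal.map_bot] at hmap
      exact hP0 hmap.symm
    rcases hcp.lt_or_eq with h | h
    · exact (h3 ⊥ _ Ideal.isPrime_bot hc (bot_lt_iff_ne_bot.mpr hc0) h).elim
    · rw [← hmap, h, Localization.AtPrime.map_eq_maximalIdeal]

open DirectSum in
/-- Structure: `x * b = a * t ^ n` with `a, b` of degree zero. -/
theorem aux_struct {B : Type*} [CommRing B] [IsDomain B] [IsIntegrallyClosed B]
    [IsNoetherianRing B] (𝒜 : ℤ → AddSubgroup B) [GradedRing 𝒜]
    (p : Ideal B) (hp : p ∈ homogHt1 𝒜) (hpi : ∀ i, i ≠ 0 → ∀ x ∈ 𝒜 i, x ∈ p) :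
    ∃ (d : ℤ) (t : B), t ∈ 𝒜 d ∧ t ≠ 0 ∧ ∀ i, ∀ x ∈ 𝒜 i, x ≠ 0 →
      ∃ (n : ℕ) (a b : B), a ∈ 𝒜 0 ∧ b ∈ 𝒜 0 ∧ b ≠ 0 ∧ i = n * d ∧ x * b = a * t ^ n := by
  classical
  obtain ⟨hht, hspan⟩ := hp
  haveI hpp : p.IsPrime := hht.1
  haveI := aux_dvr p hht
  set L := Localization.AtPrime p with hL
  have hle : p.primeCompl ≤ nonZeroDivisors B := p.primeCompl_le_nonZeroDivisors
  have hinj : Function.Injective (algebraMap B L) := IsLocalization.injective _ hle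
  have hcomp : ∀ b : B, b ∉ p → (decompose 𝒜 b 0 : B) ∉ p := by
    intro b hb h0
    apply hb
    rw [← sum_support_decompose 𝒜 b]
    refine sum_mem fun i _ => ?_
    by_cases hi : i = 0
    · subst hi; exact h0
    · exact hpi i hi _ (decompose 𝒜 b i).2
  obtain ⟨ϖ, hϖ⟩ := IsDiscreteValuationRing.exists_irreducible L
  have hm := (IsDiscreteValuationRing.irreducible_iff_uniformizer ϖ).mp hϖ
  -- choose t
  obtain ⟨t, d, htp, htd, htirr⟩ : ∃ t d, t ∈ p ∧ t ∈ 𝒜 d ∧ Irreducible (algebraMap B L t) := by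
    by_contra hcon
    push Not at hcon
    have hall : ∀ x ∈ p, algebraMap B L x ∈ Ideal.span {ϖ ^ 2} := by
      have : p ≤ (Ideal.span {ϖ ^ 2}).comap (algebraMap B L) := by
        conv_lhs => rw [hspan]
        rw [Ideal.span_le]
        rintro x ⟨hxp, i, hxi⟩
        have hni := hcon x i hxp hxi
        rw [SetLike.mem_coe, Ideal.mem_comap]
        by_cases hx0 : algebraMap B L x = 0
        · rw [hx0]; exact zero_mem _
        obtain ⟨n, hn⟩ := IsDiscreteValuationRing.associated_pow_irreducible hx0 hϖ
        rw [Ideal.mem_span_singleton]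
        have hxm : algebraMap B L x ∈ IsLocalRing.maximalIdeal L := by
          rw [← Localization.AtPrime.map_eq_maximalIdeal]; exact Ideal.mem_map_of_mem _ hxp
        have hn2 : 2 ≤ n := by
          by_contra hlt
          have : n = 0 ∨ n = 1 := by omega
          rcases this with rfl | rfl
          · rw [pow_zero, associated_one_iff_isUnit] at hn
            exact (IsLocalRing.mem_maximalIdeal _).mp hxm hn
          · rw [pow_one] at hn
            exact hni (hn.symm.irreducible hϖ)
        exact (pow_dvd_pow ϖ hn2).trans hn.symm.dvd
      exact this
    have h1 : IsLocalRing.maximalIdeal L ≤ Ideal.span {ϖ ^ 2} := by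
      rw [← Localization.AtPrime.map_eq_maximalIdeal, Ideal.map_le_iff_le_comap]
      exact hall
    have h2 : ϖ ∈ Ideal.span {ϖ ^ 2} := h1 (by rw [hm]; exact Ideal.mem_span_singleton_self _)
    rw [Ideal.mem_span_singleton] at h2
    obtain ⟨c, hc⟩ := h2
    have : ϖ * c = 1 := by
      apply mul_left_cancel₀ hϖ.ne_zero
      rw [mul_one]
      nth_rewrite 3 [hc]
      ring
    exact hϖ.not_isUnit (IsUnit.of_mul_eq_one _ this)
  have ht0 : t ≠ 0 := by
    rintro rfl
    exact htirr.ne_zero (map_zero _)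
  refine ⟨d, t, htd, ht0, fun i x hxi hx0 => ?_⟩
  have hx0' : algebraMap B L x ≠ 0 := fun h => hx0 (hinj (by rw [h, map_zero]))
  obtain ⟨n, hn⟩ := IsDiscreteValuationRing.associated_pow_irreducible hx0' htirr
  obtain ⟨u, hu⟩ := hn.symm
  -- t^n * u = x
  obtain ⟨a, b, hab⟩ := IsLocalization.exists_mk'_eq p.primeCompl (u : L)
  have hbp : (b : B) ∉ p := b.2
  have hap : a ∉ p := by
    intro ha
    have : (u : L) ∈ IsLocalRing.maximalIdeal L := by
      rw [← hab]
      exact (IsLocalization.AtPrime.mk'_mem_maximal_iff L p a b).mpr ha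
    exact (IsLocalRing.mem_maximalIdeal _).mp this u.isUnit
  have hxb : x * b = a * t ^ n := by
    apply hinj
    have e : (u : L) * algebraMap B L b = algebraMap B L a := by
      rw [← hab]; exact IsLocalization.mk'_spec _ _ _
    rw [map_mul, map_mul, map_pow, ← hu, ← e]
    ring
  have htn : t ^ n ∈ 𝒜 (n * d) := by
    have := SetLike.pow_mem_graded n htd
    rwa [nsmul_eq_mul] at this
  have hcmp : x * (decompose 𝒜 (b : B) 0 : B) = t ^ n * (decompose 𝒜 a (i - n * d) : B) := by
    have h1 := aux_mul_comp 𝒜 hxi (b : B) i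
    rw [sub_self] at h1
    rw [← h1, hxb, mul_comm a, aux_mul_comp 𝒜 htn]
  set b0 := (decompose 𝒜 (b : B) 0 : B) with hb0
  have hb0p : b0 ∉ p := hcomp _ hbp
  have hdeg : i - n * d = 0 := by
    by_contra hne
    set a' := (decompose 𝒜 a (i - n * d) : B) with ha'
    have ha'p : a' ∈ p := hpi _ hne _ (decompose 𝒜 a _).2
    have e2 : t ^ n * (a * b0) = t ^ n * (a' * b) := by
      calc t ^ n * (a * b0) = (a * t ^ n) * b0 := by ring
        _ = (x * b0) * b := by rw [← hxb]; ring
        _ = t ^ n * (a' * b) := by rw [hcmp]; ring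
    have e3 := mul_left_cancel₀ (pow_ne_zero n ht0) e2
    have : a * b0 ∈ p := by rw [e3]; exact Ideal.mul_mem_right _ _ ha'p
    rcases hpp.mem_or_mem this with h | h
    · exact hap h
    · exact hb0p h
  rw [hdeg] at hcmp
  refine ⟨n, (decompose 𝒜 a 0 : B), b0, (decompose 𝒜 a 0).2, (decompose 𝒜 (b : B) 0).2, ?_,
    by omega, by rw [hcmp, mul_comm]⟩
  intro h
  exact hb0p (by rw [h]; exact zero_mem _)

open DirectSum in
/-- The Euler derivation. -/
theorem aux_euler {B : Type*} [CommRing B] (𝒜 : ℤ → AddSubgroup B) [GradedRing 𝒜] :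
    ∃ E : Derivation ℤ B B, ∀ i, ∀ x ∈ 𝒜 i, E x = (i : B) * x := by
  classical
  let f : B →+ B := (DirectSum.toAddMonoid fun i : ℤ =>
    (AddMonoidHom.mulLeft (i : B)).comp (𝒜 i).subtype).comp
      (decomposeAddEquiv 𝒜).toAddMonoidHom
  have hf : ∀ i, ∀ x ∈ 𝒜 i, f x = (i : B) * x := by
    intro i x hx
    simp only [f, AddMonoidHom.comp_apply]
    have : (decomposeAddEquiv 𝒜).toAddMonoidHom x = decompose 𝒜 x := rfl
    rw [this, decompose_of_mem _ hx, DirectSum.toAddMonoid_of]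
    rfl
  refine ⟨Derivation.mk' f.toIntLinearMap ?_, fun i x hx => hf i x hx⟩
  intro x y
  simp only [AddMonoidHom.coe_toIntLinearMap, smul_eq_mul]
  induction x using DirectSum.Decomposition.inductionOn 𝒜 with
  | zero => simp
  | @homogeneous i m =>
    induction y using DirectSum.Decomposition.inductionOn 𝒜 with
    | zero => simp
    | @homogeneous j m' =>
      rw [hf _ _ (SetLike.mul_mem_graded m.2 m'.2), hf _ _ m.2, hf _ _ m'.2]
      push_cast
      ring
    | add a b ha hb => rw [mul_add, map_add, ha, hb, map_add]; ring
  | add a b ha hb => rw [add_mul, map_add, ha, hb, map_add]; ring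

open DirectSum in
theorem aux_final {k : Type*} [Field k] [CharZero k]
    {B : Type*} [CommRing B] [IsDomain B] [Algebra k B] [Algebra.FiniteType k B]
    (𝒜 : ℤ → AddSubgroup B) [GradedRing 𝒜]
    (d : ℤ) (t : B) (htd : t ∈ 𝒜 d) (ht0 : t ≠ 0) (hd : d ≠ 0)
    (hst : ∀ i, ∀ x ∈ 𝒜 i, x ≠ 0 →
      ∃ (n : ℕ) (a b : B), a ∈ 𝒜 0 ∧ b ∈ 𝒜 0 ∧ b ≠ 0 ∧ i = n * d ∧ x * b = a * t ^ n) :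
    ∃ D : Derivation ℤ B B, IsLND D ∧ IsHomogDer 𝒜 D ∧ D ≠ 0 ∧
      { x : B | D x = 0 } = (𝒜 0 : Set B) := by
  classical
  haveI : CharZero B := charZero_of_injective_algebraMap (algebraMap k B).injective
  obtain ⟨E, hE⟩ := aux_euler 𝒜
  obtain ⟨S, hS, hS'⟩ := aux_gens k 𝒜
  have hone : ∀ x ∈ S, ∃ s, s ∈ 𝒜 0 ∧ s ≠ 0 ∧ t ∣ s * E x := by
    intro x hx
    obtain ⟨i, hi⟩ := hS x hx
    by_cases hx0 : x = 0
    · exact ⟨1, SetLike.one_mem_graded 𝒜, one_ne_zero, by simp [hx0]⟩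
    obtain ⟨n, a, b, ha, hb, hb0, hin, hxb⟩ := hst i x hi hx0
    refine ⟨b, hb, hb0, ?_⟩
    rw [hE i x hi]
    rcases n with _ | n
    · simp [hin]
    · exact ⟨i * a * t ^ n, by rw [mul_left_comm, mul_comm b, hxb]; ring⟩
  obtain ⟨s, hs0, hsne, hsd⟩ : ∃ s, s ∈ 𝒜 0 ∧ s ≠ 0 ∧ ∀ x ∈ S, t ∣ s * E x := by
    choose! g hg using hone
    refine ⟨∏ x ∈ S, g x, ?_, Finset.prod_ne_zero_iff.mpr fun x hx => (hg x hx).2.1, ?_⟩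
    · exact prod_mem (S := SetLike.GradeZero.subring 𝒜) fun x hx => (hg x hx).1
    · intro x hx
      exact ((hg x hx).2.2).trans (mul_dvd_mul_right (Finset.dvd_prod_of_mem g hx) _)
  have hdiv : ∀ x, t ∣ s * E x := by
    intro x
    have hx : x ∈ Algebra.adjoin k (S : Set B) := by rw [hS']; trivial
    induction hx using Algebra.adjoin_induction with
    | mem x hx => exact hsd x hx
    | algebraMap r => rw [hE 0 _ (aux_k 𝒜 r)]; simp
    | add x y _ _ hx hy => rw [map_add, mul_add]; exact dvd_add hx hy
    | mul x y _ _ hx hy =>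
      rw [Derivation.leibniz, smul_eq_mul, smul_eq_mul, mul_add, mul_left_comm, mul_left_comm s]
      exact dvd_add (hy.mul_left _) (hx.mul_left _)
  choose g hg using hdiv
  let f : B →+ B := AddMonoidHom.mk' g fun x y => by
    apply mul_left_cancel₀ ht0
    rw [mul_add, ← hg, ← hg, ← hg, map_add, mul_add]
  let D : Derivation ℤ B B := Derivation.mk' f.toIntLinearMap fun x y => by
    change g (x * y) = x * g y + y * g x
    apply mul_left_cancel₀ ht0
    rw [← hg, Derivation.leibniz, smul_eq_mul, smul_eq_mul]
    linear_combination x * hg y + y * hg x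
  have hD : ∀ x, s * E x = t * D x := hg
  have hhom : ∀ i, ∀ x ∈ 𝒜 i, D x ∈ 𝒜 (i + -d) := by
    intro i x hx
    have h1 : t * D x ∈ 𝒜 i := by
      rw [← hD, hE i x hx]
      have : s * ((i : B) * x) = i • (s * x) := by rw [zsmul_eq_mul]; ring
      rw [this]
      refine zsmul_mem ?_ _
      have := SetLike.mul_mem_graded hs0 hx
      rwa [zero_add] at this
    have h2 : D x = (decompose 𝒜 (D x) (i - d) : B) := by
      apply mul_left_cancel₀ ht0
      rw [← aux_mul_comp 𝒜 htd, decompose_of_mem_same _ h1]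
    rw [h2]
    exact (decompose 𝒜 (D x) (i - d)).2
  refine ⟨D, ?_, ⟨-d, hhom⟩, ?_, ?_⟩
  · -- locally nilpotent
    have hit0 : ∀ n, (⇑D)^[n] 0 = 0 := fun n => by
      induction n with
      | zero => rfl
      | succ n ih => rw [Function.iterate_succ_apply, map_zero, ih]
    have hmono : ∀ n m x, n ≤ m → (⇑D)^[n] x = 0 → (⇑D)^[m] x = 0 := by
      intro n m x hnm h
      obtain ⟨c, rfl⟩ := Nat.exists_eq_add_of_le' hnm
      rw [Function.iterate_add_apply, h, hit0]
    have hiadd : ∀ n x y, (⇑D)^[n] (x + y) = (⇑D)^[n] x + (⇑D)^[n] y := by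
      intro n
      induction n with
      | zero => intro x y; rfl
      | succ n ih =>
        intro x y
        rw [Function.iterate_succ_apply, map_add, ih, ← Function.iterate_succ_apply,
          ← Function.iterate_succ_apply]
    have hnil : ∀ n : ℕ, ∀ x ∈ 𝒜 (n * d), (⇑D)^[n + 1] x = 0 := by
      intro n
      induction n with
      | zero =>
        intro x hx
        change D x = 0
        have h1 := hD x
        rw [hE _ x hx] at h1
        simp only [Nat.cast_zero, zero_mul, Int.cast_zero, mul_zero] at h1
        exact (mul_eq_zero.mp h1.symm).resolve_left ht0
      | succ n ih =>
        intro x hx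
        rw [Function.iterate_succ_apply]
        apply ih
        have := hhom _ x hx
        have e : ((n + 1 : ℕ) : ℤ) * d + -d = n * d := by push_cast; ring
        rwa [e] at this
    intro b
    induction b using DirectSum.Decomposition.inductionOn 𝒜 with
    | zero => exact ⟨1, one_pos, hit0 1⟩
    | @homogeneous i m =>
      by_cases hm : (m : B) = 0
      · exact ⟨1, one_pos, by rw [hm]; exact hit0 1⟩
      obtain ⟨n, _, _, _, _, _, hin, _⟩ := hst i m m.2 hm
      exact ⟨n + 1, Nat.succ_pos _, hnil n m (by rw [← hin]; exact m.2)⟩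
    | add x y hx hy =>
      obtain ⟨n, hn, hx⟩ := hx
      obtain ⟨m, hm, hy⟩ := hy
      refine ⟨n + m, by omega, ?_⟩
      rw [hiadd, hmono n (n + m) x (by omega) hx, hmono m (n + m) y (by omega) hy, add_zero]
  · intro h0
    have h1 := hD t
    rw [hE d t htd, h0, Derivation.zero_apply, mul_zero] at h1
    exact mul_ne_zero hsne (mul_ne_zero (Int.cast_ne_zero.mpr hd) ht0) h1
  · ext x
    simp only [Set.mem_setOf_eq, SetLike.mem_coe]
    constructor
    · intro hx
      rw [← sum_support_decompose 𝒜 x]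
      refine sum_mem fun i _ => ?_
      by_cases hi : i = 0
      · subst hi; exact (decompose 𝒜 x 0).2
      have hEx : E x = 0 := by
        have := hD x
        rw [hx, mul_zero] at this
        exact (mul_eq_zero.mp this).resolve_left hsne
      have hcomp : ∀ y : B, (decompose 𝒜 (E y) i : B) = (i : B) * (decompose 𝒜 y i : B) := by
        intro y
        induction y using DirectSum.Decomposition.inductionOn 𝒜 with
        | zero => simp
        | @homogeneous j m =>
          rw [hE j m m.2]
          have hjm : (j : B) * (m : B) ∈ 𝒜 j := by rw [← zsmul_eq_mul]; exact zsmul_mem m.2 j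
          by_cases hji : j = i
          · subst hji
            rw [decompose_of_mem_same _ hjm, decompose_of_mem_same _ m.2]
          · rw [decompose_of_mem_ne _ hjm hji, decompose_of_mem_ne _ m.2 hji, mul_zero]
        | add a b ha hb =>
          rw [map_add, decompose_add, decompose_add, DirectSum.add_apply, DirectSum.add_apply]
          push_cast
          rw [ha, hb, mul_add]
      have h2 := hcomp x
      rw [hEx, decompose_zero] at h2
      have h3 := (mul_eq_zero.mp h2.symm).resolve_left (Int.cast_ne_zero.mpr hi)
      rw [h3]
      exact zero_mem _
    · intro hx
      have h1 := hD x
      rw [hE _ x hx, Int.cast_zero, zero_mul, mul_zero] at h1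
      exact (mul_eq_zero.mp h1.symm).resolve_left ht0

/-- Let k be a field of characteristic 0 and B a ℤ-graded normal affine k-domain.
If e(B) ≠ 0 and ē(B) = 0 then there is a nonzero homogeneous locally nilpotent
derivation D of B with ker D = B₀; in particular B is non-rigid. -/
theorem nonrigid_of_ebar_zero
    {k : Type*} [Field k] [CharZero k]
    {B : Type*} [CommRing B] [IsDomain B] [IsIntegrallyClosed B]
    [Algebra k B] [Algebra.FiniteType k B]
    (𝒜 : ℤ → AddSubgroup B) [GradedRing 𝒜]
    (he : eB 𝒜 ≠ 0) (hebar : ebarB 𝒜 = 0) :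
    ∃ D : Derivation ℤ B B, IsLND D ∧ IsHomogDer 𝒜 D ∧ D ≠ 0 ∧
      { x : B | D x = 0 } = (𝒜 0 : Set B) := by
  haveI : IsNoetherianRing B := Algebra.FiniteType.isNoetherianRing k B
  obtain ⟨p, hp, hpi⟩ := aux_prime k 𝒜 he hebar
  obtain ⟨d, t, htd, ht0, hst⟩ := aux_struct 𝒜 p hp hpi
  refine aux_final (k := k) 𝒜 d t htd ht0 ?_ hst
  rintro rfl
  apply he
  rw [eB, aux_groupGen, Gsub, AddSubgroup.closure_eq_bot_iff]
  intro i hi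
  obtain ⟨x, hx⟩ := AddSubgroup.ne_bot_iff_exists_ne_zero.mp hi
  obtain ⟨n, _, _, _, _, _, hin, _⟩ := hst i x x.2 fun h => hx (Subtype.ext h)
  simpa using hin
end
end
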